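/- arXiv:1801.06148 — 2 statements merged into one kernel-verified Lean document; each statement's English description precedes it below -/
import Mathlib

section
/- Let H be a separable Hilbert space and let μ_n (n ≥ 1) and μ_∞ be Borel probability measures on H with finite second moments. Assume that ∫_H ‖ξ‖² dμ_n(ξ) → ∫_H ‖ξ‖² dμ_∞(ξ) as n → ∞, and that for every u ∈ H with ‖u‖ = 1 the pushforward of μ_n under ξ ↦ ⟨ξ, u⟩ converges weakly on ℝ to the pushforward of μ_∞ under the same map. Then W_2(μ_n, μ_∞) → 0 as n → ∞. -/
open MeasureTheory Filter Topology
open scoped ENNReal NNReal RealInnerProductSpace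

/-- The `L^p`-Wasserstein distance. -/
noncomputable def wassersteinDist {E : Type*} [NormedAddCommGroup E] [MeasurableSpace E]
    (p : ℝ) (μ ν : Measure E) : ℝ :=
  (⨅ π ∈ {π : Measure (E × E) | π.map Prod.fst = μ ∧ π.map Prod.snd = ν},
      ∫⁻ q, (‖q.1 - q.2‖₊ : ℝ≥0∞) ^ p ∂π).toReal ^ (1 / p)

/-- `μ` has a finite `p`-th moment. -/
def HasFiniteMoment {E : Type*} [NormedAddCommGroup E] [MeasurableSpace E]
    (p : ℝ) (μ : Measure E) : Prop :=
  ∫⁻ ξ, (‖ξ‖₊ : ℝ≥0∞) ^ p ∂μ ≠ ∞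

/-!
Convergence of the laws of all the `⟪ξ, u⟫` is convergence of characteristic functions, so by Lévy's
theorem the images of `μ_n` under every finite-dimensional orthogonal projection `P` converge
weakly. By Pythagoras, `∫ ‖x - P x‖² dμ_n` is the difference of the second moment of `μ_n`, which
converges by assumption, and `∫ ‖P x‖² dμ_n`, which is asymptotically at least
`∫ ‖P x‖² dμ_∞` up to truncation. Hence `P` is uniformly close to the identity in `L²(μ_n)` as soon
as it captures most of the second moment of `μ_∞`, and `μ_n → μ_∞` weakly.

Weak convergence together with convergence of `p`-th moments gives `W_p → 0`: cut the space into
countably many small cells with `μ_∞`-null boundary and match as much mass as possible inside each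
cell. The unmatched mass tends to `0`, and moment convergence makes `‖x‖ ^ p` uniformly integrable,
so that transporting the remainder by an arbitrary coupling costs arbitrarily little.
-/

open scoped Function

section Couplings

variable {X Y : Type*} [MeasurableSpace X] [MeasurableSpace Y]

/-- The set of couplings of `μ` and `ν`: the measures on the product with these marginals. -/
def couplings (μ : Measure X) (ν : Measure Y) : Set (Measure (X × Y)) :=
  {π | π.map Prod.fst = μ ∧ π.map Prod.snd = ν}

lemma add_mem_couplings {μ₁ μ₂ : Measure X} {ν₁ ν₂ : Measure Y} {π₁ π₂ : Measure (X × Y)}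
    (h₁ : π₁ ∈ couplings μ₁ ν₁) (h₂ : π₂ ∈ couplings μ₂ ν₂) :
    π₁ + π₂ ∈ couplings (μ₁ + μ₂) (ν₁ + ν₂) :=
  ⟨by rw [Measure.map_add _ _ measurable_fst, h₁.1, h₂.1],
    by rw [Measure.map_add _ _ measurable_snd, h₁.2, h₂.2]⟩

lemma inv_smul_prod_mem_couplings {μ : Measure X} {ν : Measure Y} [IsFiniteMeasure μ]
    [IsFiniteMeasure ν] (h : μ Set.univ = ν Set.univ) :
    (μ Set.univ)⁻¹ • μ.prod ν ∈ couplings μ ν := by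
  obtain h₀ | h₀ := eq_or_ne (μ Set.univ) 0
  · obtain rfl : μ = 0 := Measure.measure_univ_eq_zero.mp h₀
    obtain rfl : ν = 0 := Measure.measure_univ_eq_zero.mp (h ▸ h₀)
    simp [couplings]
  · have hinv : (μ Set.univ)⁻¹ * μ Set.univ = 1 :=
      ENNReal.inv_mul_cancel h₀ (measure_ne_top μ _)
    constructor
    · rw [Measure.map_smul, Measure.map_fst_prod, ← h, smul_smul, hinv, one_smul]
    · rw [Measure.map_smul, Measure.map_snd_prod, smul_smul, hinv, one_smul]

/-- A partial coupling of `μ` and `ν`: a measure on the product whose marginals are dominated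
by `μ` and `ν`. It records the part of the mass that a transport plan already matches. -/
structure IsPartialCoupling (ρ : Measure (X × Y)) (μ : Measure X) (ν : Measure Y) : Prop where
  fst_le : ρ.fst ≤ μ
  snd_le : ρ.snd ≤ ν

lemma IsPartialCoupling.univ_le {ρ : Measure (X × Y)} {μ : Measure X} {ν : Measure Y}
    (hρ : IsPartialCoupling ρ μ ν) : ρ Set.univ ≤ μ Set.univ :=
  Measure.fst_univ (ρ := ρ) ▸ hρ.fst_le Set.univ

lemma IsPartialCoupling.fst_sub_univ {ρ : Measure (X × Y)} {μ : Measure X} {ν : Measure Y}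
    [IsFiniteMeasure μ] (hρ : IsPartialCoupling ρ μ ν) :
    (μ - ρ.fst) Set.univ = μ Set.univ - ρ Set.univ := by
  have : IsFiniteMeasure ρ.fst := isFiniteMeasure_of_le μ hρ.fst_le
  rw [Measure.sub_apply MeasurableSet.univ hρ.fst_le, Measure.fst_univ]

lemma IsPartialCoupling.snd_sub_univ {ρ : Measure (X × Y)} {μ : Measure X} {ν : Measure Y}
    [IsFiniteMeasure ν] (hρ : IsPartialCoupling ρ μ ν) :
    (ν - ρ.snd) Set.univ = ν Set.univ - ρ Set.univ := by
  have : IsFiniteMeasure ρ.snd := isFiniteMeasure_of_le ν hρ.snd_le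
  rw [Measure.sub_apply MeasurableSet.univ hρ.snd_le, Measure.snd_univ]

theorem IsPartialCoupling.exists_add_mem_couplings {ρ : Measure (X × Y)} {μ : Measure X}
    {ν : Measure Y} [IsFiniteMeasure μ] [IsFiniteMeasure ν] (hρ : IsPartialCoupling ρ μ ν)
    (h : μ Set.univ = ν Set.univ) :
    ∃ π ∈ couplings (μ - ρ.fst) (ν - ρ.snd), ρ + π ∈ couplings μ ν := by
  have : IsFiniteMeasure ρ := ⟨hρ.univ_le.trans_lt (measure_lt_top μ _)⟩
  have hres : (μ - ρ.fst) Set.univ = (ν - ρ.snd) Set.univ := by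
    rw [hρ.fst_sub_univ, hρ.snd_sub_univ, h]
  have hπ := inv_smul_prod_mem_couplings hres
  refine ⟨_, hπ, ?_⟩
  convert add_mem_couplings (⟨rfl, rfl⟩ : ρ ∈ couplings ρ.fst ρ.snd) hπ
  · rw [add_comm, Measure.sub_add_cancel_of_le hρ.fst_le]
  · rw [add_comm, Measure.sub_add_cancel_of_le hρ.snd_le]

end Couplings

section BlockCoupling

variable {X : Type*} [MeasurableSpace X]

/-- A countable measurable partition of the whole space; blocks may be empty. -/
structure IsMeasurablePartition (A : ℕ → Set X) : Prop where
  measurableSet : ∀ i, MeasurableSet (A i)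
  pairwise_disjoint : Pairwise (Disjoint on A)
  iUnion_eq_univ : ⋃ i, A i = Set.univ

/-- The block-diagonal partial coupling of `μ` and `ν` along `A`: inside each block `A i × A i`
it is the largest multiple of `μ.prod ν` whose marginals are dominated by `μ` and `ν`. -/
noncomputable def blockCoupling (μ ν : Measure X) (A : ℕ → Set X) : Measure (X × X) :=
  Measure.sum fun i =>
    (max (μ (A i)) (ν (A i)))⁻¹ • (μ.restrict (A i)).prod (ν.restrict (A i))

variable {μ ν : Measure X} {A : ℕ → Set X}

lemma IsMeasurablePartition.sum_restrict (hA : IsMeasurablePartition A) :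
    Measure.sum (fun i => μ.restrict (A i)) = μ := by
  rw [← Measure.restrict_iUnion hA.pairwise_disjoint hA.measurableSet, hA.iUnion_eq_univ,
    Measure.restrict_univ]

lemma IsMeasurablePartition.tsum_measure (hA : IsMeasurablePartition A) :
    ∑' i, μ (A i) = μ Set.univ := by
  rw [← measure_iUnion hA.pairwise_disjoint hA.measurableSet, hA.iUnion_eq_univ]

lemma measure_sum_mono {μs νs : ℕ → Measure X} (h : ∀ i, μs i ≤ νs i) :
    Measure.sum μs ≤ Measure.sum νs :=
  Measure.le_iff.mpr fun s hs => by
    simpa only [Measure.sum_apply _ hs] using ENNReal.tsum_le_tsum fun i => h i s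

lemma inv_max_smul_le {a b : ℝ≥0∞} (ρ : Measure X) : ((max a b)⁻¹ * b) • ρ ≤ ρ := by
  have hle : (max a b)⁻¹ * b ≤ 1 :=
    (mul_le_mul_right (le_max_right a b) _).trans (ENNReal.inv_mul_le_one _)
  calc ((max a b)⁻¹ * b) • ρ ≤ (1 : ℝ≥0∞) • ρ := by gcongr
    _ = ρ := one_smul _ ρ

lemma isPartialCoupling_blockCoupling [SFinite ν] (hA : IsMeasurablePartition A) :
    IsPartialCoupling (blockCoupling μ ν A) μ ν := by
  constructor
  · rw [Measure.fst, blockCoupling, Measure.map_sum measurable_fst.aemeasurable]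
    refine (measure_sum_mono fun i => ?_).trans hA.sum_restrict.le
    rw [Measure.map_smul, Measure.map_fst_prod, smul_smul, Measure.restrict_apply_univ]
    exact inv_max_smul_le _
  · rw [Measure.snd, blockCoupling, Measure.map_sum measurable_snd.aemeasurable]
    refine (measure_sum_mono fun i => ?_).trans hA.sum_restrict.le
    rw [Measure.map_smul, Measure.map_snd_prod, smul_smul, Measure.restrict_apply_univ, max_comm]
    exact inv_max_smul_le _

lemma blockCoupling_univ [IsFiniteMeasure μ] [IsFiniteMeasure ν] :
    blockCoupling μ ν A Set.univ = ∑' i, min (μ (A i)) (ν (A i)) := by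
  rw [blockCoupling, Measure.sum_apply _ MeasurableSet.univ]
  refine tsum_congr fun i => ?_
  rw [Measure.smul_apply, smul_eq_mul, ← Set.univ_prod_univ, Measure.prod_prod,
    Measure.restrict_apply_univ, Measure.restrict_apply_univ]
  obtain h₀ | h₀ := eq_or_ne (max (μ (A i)) (ν (A i))) 0
  · obtain ⟨hμ, hν⟩ : μ (A i) = 0 ∧ ν (A i) = 0 := by simpa using h₀
    simp only [hμ, hν, mul_zero, min_self]
  · rw [← max_mul_min (μ (A i))]
    exact ENNReal.inv_mul_cancel_left h₀ (by simp)

lemma ae_blockCoupling [SFinite μ] [SFinite ν] (hA : ∀ i, MeasurableSet (A i)) :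
    ∀ᵐ q ∂blockCoupling μ ν A, ∃ i, q.1 ∈ A i ∧ q.2 ∈ A i := by
  rw [blockCoupling, Measure.ae_sum_iff]
  intro i
  refine Measure.ae_smul_measure ?_ _
  rw [Measure.prod_restrict]
  filter_upwards [ae_restrict_mem ((hA i).prod (hA i))] with q hq using ⟨i, hq⟩

end BlockCoupling

section ContinuityPartition

variable {X : Type*} [PseudoMetricSpace X] [MeasurableSpace X]

lemma exists_null_frontier_ball [OpensMeasurableSpace X] (ν : Measure X) [SFinite ν]
    (x : X) {a b : ℝ} (hab : a < b) : ∃ r ∈ Set.Ioo a b, ν (frontier (Metric.ball x r)) = 0 := by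
  simpa only [Metric.thickening_singleton] using exists_null_frontier_thickening ν {x} hab

lemma measure_frontier_sdiff_eq_zero {ν : Measure X} {s t : Set X} (hs : ν (frontier s) = 0)
    (ht : ν (frontier t) = 0) : ν (frontier (s \ t)) = 0 := by
  rw [Set.sdiff_eq]
  exact null_frontier_inter hs (by rwa [frontier_compl])

lemma isMeasurablePartition_disjointed {X : Type*} [MeasurableSpace X] {B : ℕ → Set X}
    (hB : ∀ i, MeasurableSet (B i)) (hcover : ⋃ i, B i = Set.univ) :
    IsMeasurablePartition (disjointed B) where
  measurableSet := MeasurableSet.disjointed hB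
  pairwise_disjoint := disjoint_disjointed B
  iUnion_eq_univ := by rw [iUnion_disjointed, hcover]

theorem exists_partition_null_frontier [OpensMeasurableSpace X] [Nonempty X]
    [TopologicalSpace.SeparableSpace X] (ν : Measure X) [SFinite ν] {δ : ℝ} (hδ : 0 < δ) :
    ∃ A : ℕ → Set X, IsMeasurablePartition A ∧ (∀ i, ν (frontier (A i)) = 0) ∧
      ∀ i, ∀ x ∈ A i, ∀ y ∈ A i, dist x y ≤ δ := by
  let z := TopologicalSpace.denseSeq X
  choose r hr hnull using fun i => exists_null_frontier_ball ν (z i) (half_lt_self (half_pos hδ))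
  let B : ℕ → Set X := fun i => Metric.ball (z i) (r i)
  have hcover : ⋃ i, B i = Set.univ := by
    refine Set.eq_univ_of_forall fun x => Set.mem_iUnion.mpr ?_
    obtain ⟨i, hi⟩ := (TopologicalSpace.denseRange_denseSeq X).exists_dist_lt x
      (half_pos (half_pos hδ))
    exact ⟨i, hi.trans (hr i).1⟩
  refine ⟨disjointed B, isMeasurablePartition_disjointed (fun _ => measurableSet_ball) hcover,
    fun i => ?_, fun i x hx y hy => ?_⟩
  · exact disjointedRec (p := fun s => ν (frontier s) = 0)
      (fun _ j hs => measure_frontier_sdiff_eq_zero hs (hnull j)) (hnull i)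
  · have hx' : dist x (z i) < r i := disjointed_subset B i hx
    have hy' : dist y (z i) < r i := disjointed_subset B i hy
    linarith [dist_triangle_right x y (z i), (hr i).2]

end ContinuityPartition

section WeakConvergence

variable {ι X : Type*} {l : Filter ι} [TopologicalSpace X] [MeasurableSpace X]
  [OpensMeasurableSpace X] {μ : ι → ProbabilityMeasure X} {ν : ProbabilityMeasure X}

theorem tendsto_tsum_min_measure [HasOuterApproxClosed X] (hμ : Tendsto μ l (𝓝 ν))
    {A : ℕ → Set X} (hA : IsMeasurablePartition A)
    (hnull : ∀ k, (ν : Measure X) (frontier (A k)) = 0) :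
    Tendsto (fun i => ∑' k, min ((μ i : Measure X) (A k)) ((ν : Measure X) (A k))) l (𝓝 1) := by
  have hν : ∑' k, (ν : Measure X) (A k) = 1 := hA.tsum_measure.trans measure_univ
  refine tendsto_order.mpr ⟨fun a ha => ?_, fun a ha => Eventually.of_forall fun i => ?_⟩
  · obtain ⟨s, hs⟩ : ∃ s : Finset ℕ, a < ∑ k ∈ s, (ν : Measure X) (A k) := by
      rwa [← hν, ENNReal.tsum_eq_iSup_sum, lt_iSup_iff] at ha
    have hlim : Tendsto (fun i => ∑ k ∈ s, min ((μ i : Measure X) (A k)) ((ν : Measure X) (A k)))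
        l (𝓝 (∑ k ∈ s, (ν : Measure X) (A k))) := by
      refine tendsto_finsetSum s fun k _ => ?_
      simpa only [min_self] using
        (ProbabilityMeasure.tendsto_measure_of_null_frontier_of_tendsto' hμ (hnull k)).min
          (tendsto_const_nhds (x := (ν : Measure X) (A k)))
    filter_upwards [hlim.eventually_const_lt hs] with i hi
    exact hi.trans_le (ENNReal.sum_le_tsum s)
  · exact ((ENNReal.tsum_le_tsum fun k => min_le_right _ _).trans_eq hν).trans_lt ha

theorem exists_isPartialCoupling_tendsto_univ {X : Type*} [PseudoMetricSpace X]
    [TopologicalSpace.SeparableSpace X] [MeasurableSpace X] [OpensMeasurableSpace X]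
    {μ : ι → ProbabilityMeasure X} {ν : ProbabilityMeasure X} (hμ : Tendsto μ l (𝓝 ν))
    {δ : ℝ} (hδ : 0 < δ) :
    ∃ ρ : ι → Measure (X × X), (∀ i, IsPartialCoupling (ρ i) (μ i) ν) ∧
      (∀ i, ∀ᵐ q ∂ρ i, dist q.1 q.2 ≤ δ) ∧ Tendsto (fun i => ρ i Set.univ) l (𝓝 1) := by
  have : Nonempty X := nonempty_of_isProbabilityMeasure (ν : Measure X)
  obtain ⟨A, hA, hnull, hdist⟩ := exists_partition_null_frontier (ν : Measure X) hδ
  refine ⟨fun i => blockCoupling (μ i) ν A, fun i => isPartialCoupling_blockCoupling hA,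
    fun i => ?_, ?_⟩
  · filter_upwards [ae_blockCoupling hA.measurableSet] with q ⟨k, hk₁, hk₂⟩
    exact hdist k _ hk₁ _ hk₂
  · simpa only [blockCoupling_univ] using tendsto_tsum_min_measure hμ hA hnull

end WeakConvergence

section UniformIntegrability

variable {X : Type*} [MeasurableSpace X]

lemma lintegral_le_mul_univ_add_lintegral_tsub {α μ : Measure X} (hα : α ≤ μ) (f : X → ℝ≥0∞)
    (R : ℝ≥0∞) : ∫⁻ x, f x ∂α ≤ R * α Set.univ + ∫⁻ x, f x - R ∂μ :=
  calc ∫⁻ x, f x ∂α ≤ ∫⁻ x, R + (f x - R) ∂α := lintegral_mono fun x => le_add_tsub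
    _ = R * α Set.univ + ∫⁻ x, f x - R ∂α := by
      rw [lintegral_add_left measurable_const, lintegral_const]
    _ ≤ R * α Set.univ + ∫⁻ x, f x - R ∂μ := by gcongr

lemma lintegral_min_const_ne_top {μ : Measure X} [IsFiniteMeasure μ] (f : X → ℝ≥0∞) (R : ℝ≥0) :
    ∫⁻ x, min (f x) R ∂μ ≠ ∞ :=
  ((lintegral_mono fun _ => min_le_right _ _).trans_lt
    (lintegral_const_lt_top ENNReal.coe_ne_top)).ne

lemma lintegral_tsub_const {μ : Measure X} [IsFiniteMeasure μ] {f : X → ℝ≥0∞}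
    (hf : Measurable f) (R : ℝ≥0) :
    ∫⁻ x, f x - R ∂μ = ∫⁻ x, f x ∂μ - ∫⁻ x, min (f x) R ∂μ := by
  rw [← lintegral_sub (by fun_prop) (lintegral_min_const_ne_top f R)
    (ae_of_all _ fun x => min_le_left _ _)]
  simp only [tsub_min]

lemma tendsto_lintegral_tsub_natCast {μ : Measure X} {f : X → ℝ≥0} (hf : Measurable f)
    (hint : ∫⁻ x, f x ∂μ ≠ ∞) :
    Tendsto (fun R : ℕ => ∫⁻ x, (f x : ℝ≥0∞) - (R : ℝ≥0) ∂μ) atTop (𝓝 0) := by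
  rw [← lintegral_zero (μ := μ)]
  refine tendsto_lintegral_of_dominated_convergence (fun x => (f x : ℝ≥0∞)) (fun R => by fun_prop)
    (fun R => ae_of_all _ fun x => tsub_le_self) hint (ae_of_all _ fun x => ?_)
  obtain ⟨N, hN⟩ := exists_nat_ge (f x)
  refine tendsto_const_nhds.congr' ?_
  filter_upwards [eventually_ge_atTop N] with R hR
  refine (tsub_eq_zero_of_le ?_).symm
  exact_mod_cast hN.trans (Nat.cast_le.mpr hR)

variable {ι : Type*} {l : Filter ι} [TopologicalSpace X] [OpensMeasurableSpace X]
  {μ : ι → ProbabilityMeasure X} {ν : ProbabilityMeasure X} {f : X → ℝ≥0}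

lemma tendsto_lintegral_min_of_tendsto (hμ : Tendsto μ l (𝓝 ν)) (hf : Continuous f) (R : ℝ≥0) :
    Tendsto (fun i => ∫⁻ x, min (f x : ℝ≥0∞) R ∂(μ i : Measure X)) l
      (𝓝 (∫⁻ x, min (f x : ℝ≥0∞) R ∂(ν : Measure X))) := by
  let g : BoundedContinuousFunction X ℝ≥0 :=
    .mkOfBound ⟨fun x => min (f x) R, by fun_prop⟩ R fun x y => by
      rw [NNReal.dist_eq]
      exact abs_sub_le_of_nonneg_of_le (NNReal.coe_nonneg _) (min_le_right (f x) R)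
        (NNReal.coe_nonneg _) (min_le_right (f y) R)
  simpa [g] using ProbabilityMeasure.tendsto_iff_forall_lintegral_tendsto.mp hμ g

lemma tendsto_lintegral_tsub_of_tendsto (hμ : Tendsto μ l (𝓝 ν)) (hf : Continuous f)
    (hint : ∫⁻ x, f x ∂(ν : Measure X) ≠ ∞)
    (hmom : Tendsto (fun i => ∫⁻ x, f x ∂(μ i : Measure X)) l (𝓝 (∫⁻ x, f x ∂(ν : Measure X))))
    (R : ℝ≥0) :
    Tendsto (fun i => ∫⁻ x, (f x : ℝ≥0∞) - R ∂(μ i : Measure X)) l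
      (𝓝 (∫⁻ x, (f x : ℝ≥0∞) - R ∂(ν : Measure X))) := by
  have hfm : Measurable fun x => (f x : ℝ≥0∞) := by fun_prop
  simp only [lintegral_tsub_const hfm]
  exact ENNReal.Tendsto.sub hmom (tendsto_lintegral_min_of_tendsto hμ hf R) (.inl hint)

theorem tendsto_lintegral_zero_of_le_of_tendsto (hμ : Tendsto μ l (𝓝 ν)) (hf : Continuous f)
    (hint : ∫⁻ x, f x ∂(ν : Measure X) ≠ ∞)
    (hmom : Tendsto (fun i => ∫⁻ x, f x ∂(μ i : Measure X)) l (𝓝 (∫⁻ x, f x ∂(ν : Measure X))))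
    {α : ι → Measure X} (hα : ∀ i, α i ≤ μ i)
    (hmass : Tendsto (fun i => α i Set.univ) l (𝓝 0)) :
    Tendsto (fun i => ∫⁻ x, f x ∂(α i)) l (𝓝 0) := by
  refine ENNReal.tendsto_nhds_zero.mpr fun ε hε => ?_
  obtain ⟨R, hR⟩ := ((tendsto_lintegral_tsub_natCast hf.measurable hint).eventually_lt_const
    hε).exists
  have hlim : Tendsto (fun i => (R : ℝ≥0) * α i Set.univ +
      ∫⁻ x, (f x : ℝ≥0∞) - (R : ℝ≥0) ∂(μ i : Measure X)) l
      (𝓝 ((R : ℝ≥0) * 0 + ∫⁻ x, (f x : ℝ≥0∞) - (R : ℝ≥0) ∂(ν : Measure X))) :=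
    (ENNReal.Tendsto.const_mul hmass (.inr ENNReal.coe_ne_top)).add
      (tendsto_lintegral_tsub_of_tendsto hμ hf hint hmom R)
  rw [mul_zero, zero_add] at hlim
  filter_upwards [hlim.eventually_lt_const hR] with i hi
  exact (lintegral_le_mul_univ_add_lintegral_tsub (hα i) _ _).trans hi.le

end UniformIntegrability

section TransportCost

variable {E : Type*} [NormedAddCommGroup E] [MeasurableSpace E]

/-- The optimal transport cost for the cost function `‖x - y‖ ^ p`, that is, the `p`-th power of
the `L^p`-Wasserstein distance, as an extended nonnegative number. -/
noncomputable def transportCost (p : ℝ) (μ ν : Measure E) : ℝ≥0∞ :=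
  ⨅ π ∈ couplings μ ν, ∫⁻ q, (‖q.1 - q.2‖₊ : ℝ≥0∞) ^ p ∂π

lemma wassersteinDist_eq_transportCost (p : ℝ) (μ ν : Measure E) :
    wassersteinDist p μ ν = (transportCost p μ ν).toReal ^ (1 / p) :=
  rfl

lemma nnnorm_sub_rpow_le {E : Type*} [SeminormedAddCommGroup E] {p : ℝ} (hp : 0 ≤ p) (x y : E) :
    (‖x - y‖₊ : ℝ≥0∞) ^ p ≤ 2 ^ p * ((‖x‖₊ : ℝ≥0∞) ^ p + (‖y‖₊ : ℝ≥0∞) ^ p) := by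
  have hmax : (‖x - y‖₊ : ℝ≥0∞) ≤ 2 * max (‖x‖₊ : ℝ≥0∞) ‖y‖₊ := by
    rw [two_mul]
    exact_mod_cast (nnnorm_sub_le x y).trans (add_le_add (le_max_left _ _) (le_max_right _ _))
  calc (‖x - y‖₊ : ℝ≥0∞) ^ p ≤ (2 * max (‖x‖₊ : ℝ≥0∞) ‖y‖₊) ^ p := by gcongr
    _ = 2 ^ p * max ((‖x‖₊ : ℝ≥0∞) ^ p) ((‖y‖₊ : ℝ≥0∞) ^ p) := by
      rw [ENNReal.mul_rpow_of_nonneg _ _ hp, (ENNReal.monotone_rpow_of_nonneg hp).map_max]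
    _ ≤ 2 ^ p * ((‖x‖₊ : ℝ≥0∞) ^ p + (‖y‖₊ : ℝ≥0∞) ^ p) := by
      gcongr
      exact max_le_add_of_nonneg zero_le zero_le

variable [OpensMeasurableSpace E]

lemma lintegral_nnnorm_sub_rpow_le {p : ℝ} (hp : 0 ≤ p) {α β : Measure E}
    {π : Measure (E × E)} (hπ : π ∈ couplings α β) :
    ∫⁻ q, (‖q.1 - q.2‖₊ : ℝ≥0∞) ^ p ∂π ≤
      2 ^ p * (∫⁻ x, (‖x‖₊ : ℝ≥0∞) ^ p ∂α + ∫⁻ y, (‖y‖₊ : ℝ≥0∞) ^ p ∂β) := by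
  have hmeas : Measurable fun x : E => (‖x‖₊ : ℝ≥0∞) ^ p := by fun_prop
  calc ∫⁻ q, (‖q.1 - q.2‖₊ : ℝ≥0∞) ^ p ∂π
      ≤ ∫⁻ q, 2 ^ p * ((‖q.1‖₊ : ℝ≥0∞) ^ p + (‖q.2‖₊ : ℝ≥0∞) ^ p) ∂π :=
        lintegral_mono fun q => nnnorm_sub_rpow_le hp q.1 q.2
    _ = 2 ^ p * (∫⁻ q, (‖q.1‖₊ : ℝ≥0∞) ^ p ∂π + ∫⁻ q, (‖q.2‖₊ : ℝ≥0∞) ^ p ∂π) := by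
      rw [lintegral_const_mul _ (by fun_prop), lintegral_add_left (by fun_prop)]
    _ = 2 ^ p * (∫⁻ x, (‖x‖₊ : ℝ≥0∞) ^ p ∂α + ∫⁻ y, (‖y‖₊ : ℝ≥0∞) ^ p ∂β) := by
      rw [← hπ.1, ← hπ.2, lintegral_map hmeas measurable_fst, lintegral_map hmeas measurable_snd]

theorem IsPartialCoupling.transportCost_le {p : ℝ} (hp : 0 ≤ p) {μ ν : Measure E}
    [IsProbabilityMeasure μ] [IsProbabilityMeasure ν] {ρ : Measure (E × E)}
    (hρ : IsPartialCoupling ρ μ ν) {d : ℝ≥0∞} (hd : ∀ᵐ q ∂ρ, (‖q.1 - q.2‖₊ : ℝ≥0∞) ≤ d) :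
    transportCost p μ ν ≤ d ^ p + 2 ^ p *
      (∫⁻ x, (‖x‖₊ : ℝ≥0∞) ^ p ∂(μ - ρ.fst) + ∫⁻ y, (‖y‖₊ : ℝ≥0∞) ^ p ∂(ν - ρ.snd)) := by
  obtain ⟨π, hπ, hρπ⟩ := hρ.exists_add_mem_couplings (by simp only [measure_univ])
  refine (iInf₂_le (ρ + π) hρπ).trans ?_
  rw [lintegral_add_measure]
  refine add_le_add ?_ (lintegral_nnnorm_sub_rpow_le hp hπ)
  calc ∫⁻ q, (‖q.1 - q.2‖₊ : ℝ≥0∞) ^ p ∂ρ ≤ ∫⁻ _, d ^ p ∂ρ :=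
        lintegral_mono_ae (hd.mono fun q hq => ENNReal.rpow_le_rpow hq hp)
    _ = d ^ p * ρ Set.univ := lintegral_const _
    _ ≤ d ^ p := mul_le_of_le_one_right' (hρ.univ_le.trans_eq measure_univ)

end TransportCost

section WassersteinConvergence

lemma exists_pos_ofReal_rpow_lt {p : ℝ} (hp : 0 < p) {ε : ℝ≥0∞} (hε : 0 < ε) :
    ∃ δ : ℝ, 0 < δ ∧ ENNReal.ofReal δ ^ p < ε := by
  have hcont : Continuous fun δ : ℝ => ENNReal.ofReal δ ^ p :=
    ENNReal.continuous_rpow_const.comp ENNReal.continuous_ofReal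
  have hlim : Tendsto (fun δ : ℝ => ENNReal.ofReal δ ^ p) (𝓝[>] 0) (𝓝 0) := by
    simpa [hp] using (hcont.tendsto 0).mono_left nhdsWithin_le_nhds
  exact (eventually_mem_nhdsWithin.and (hlim.eventually_lt_const hε)).exists

variable {ι E : Type*} {l : Filter ι} [NormedAddCommGroup E] [MeasurableSpace E]
  {μ : ι → ProbabilityMeasure E} {ν : ProbabilityMeasure E} {p : ℝ}

theorem tendsto_lintegral_nnnorm_rpow_zero_of_le [OpensMeasurableSpace E] (hp : 0 ≤ p)
    (hμ : Tendsto μ l (𝓝 ν)) (hν : HasFiniteMoment p (ν : Measure E))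
    (hmom : Tendsto (fun i => ∫⁻ x, (‖x‖₊ : ℝ≥0∞) ^ p ∂(μ i : Measure E)) l
      (𝓝 (∫⁻ x, (‖x‖₊ : ℝ≥0∞) ^ p ∂(ν : Measure E))))
    {α : ι → Measure E} (hα : ∀ i, α i ≤ μ i)
    (hmass : Tendsto (fun i => α i Set.univ) l (𝓝 0)) :
    Tendsto (fun i => ∫⁻ x, (‖x‖₊ : ℝ≥0∞) ^ p ∂(α i)) l (𝓝 0) := by
  simp only [HasFiniteMoment, ← ENNReal.coe_rpow_of_nonneg _ hp] at hν hmom ⊢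
  exact tendsto_lintegral_zero_of_le_of_tendsto hμ
    ((NNReal.continuous_rpow_const hp).comp continuous_nnnorm) hν hmom hα hmass

variable [TopologicalSpace.SeparableSpace E]

theorem tendsto_transportCost_zero [OpensMeasurableSpace E] (hp : 0 < p) (hμ : Tendsto μ l (𝓝 ν))
    (hν : HasFiniteMoment p (ν : Measure E))
    (hmom : Tendsto (fun i => ∫⁻ x, (‖x‖₊ : ℝ≥0∞) ^ p ∂(μ i : Measure E)) l
      (𝓝 (∫⁻ x, (‖x‖₊ : ℝ≥0∞) ^ p ∂(ν : Measure E)))) :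
    Tendsto (fun i => transportCost p (μ i : Measure E) ν) l (𝓝 0) := by
  refine ENNReal.tendsto_nhds_zero.mpr fun ε hε => ?_
  obtain ⟨δ, hδ, hδε⟩ := exists_pos_ofReal_rpow_lt hp hε
  obtain ⟨ρ, hρ, hdist, hmass⟩ := exists_isPartialCoupling_tendsto_univ hμ hδ
  have hres : Tendsto (fun i => 1 - ρ i Set.univ) l (𝓝 0) := by
    simpa using ENNReal.Tendsto.sub tendsto_const_nhds hmass (.inl ENNReal.one_ne_top)
  have hfst : Tendsto (fun i => ∫⁻ x, (‖x‖₊ : ℝ≥0∞) ^ p ∂((μ i : Measure E) - (ρ i).fst)) l (𝓝 0) :=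
    tendsto_lintegral_nnnorm_rpow_zero_of_le hp.le hμ hν hmom (fun _ => Measure.sub_le)
      (by simpa only [(hρ _).fst_sub_univ, measure_univ] using hres)
  have hsnd : Tendsto (fun i => ∫⁻ x, (‖x‖₊ : ℝ≥0∞) ^ p ∂((ν : Measure E) - (ρ i).snd)) l (𝓝 0) :=
    tendsto_lintegral_nnnorm_rpow_zero_of_le hp.le tendsto_const_nhds hν tendsto_const_nhds
      (fun _ => Measure.sub_le) (by simpa only [(hρ _).snd_sub_univ, measure_univ] using hres)
  have hlim : Tendsto (fun i => ENNReal.ofReal δ ^ p + 2 ^ p *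
      (∫⁻ x, (‖x‖₊ : ℝ≥0∞) ^ p ∂((μ i : Measure E) - (ρ i).fst) +
        ∫⁻ x, (‖x‖₊ : ℝ≥0∞) ^ p ∂((ν : Measure E) - (ρ i).snd))) l (𝓝 (ENNReal.ofReal δ ^ p)) := by
    have hconst : (2 : ℝ≥0∞) ^ p ≠ ∞ :=
      ENNReal.rpow_ne_top_of_nonneg hp.le ENNReal.ofNat_ne_top
    simpa using tendsto_const_nhds.add
      (ENNReal.Tendsto.const_mul (hfst.add hsnd) (.inr hconst))
  filter_upwards [hlim.eventually_lt_const hδε] with i hi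
  refine ((hρ i).transportCost_le hp.le ?_).trans hi.le
  filter_upwards [hdist i] with q hq
  rwa [← enorm_eq_nnnorm, ← edist_eq_enorm_sub, edist_le_ofReal hδ.le]

theorem tendsto_wassersteinDist_zero [OpensMeasurableSpace E] (hp : 0 < p)
    (hμ : Tendsto μ l (𝓝 ν)) (hν : HasFiniteMoment p (ν : Measure E))
    (hmom : Tendsto (fun i => ∫⁻ x, (‖x‖₊ : ℝ≥0∞) ^ p ∂(μ i : Measure E)) l
      (𝓝 (∫⁻ x, (‖x‖₊ : ℝ≥0∞) ^ p ∂(ν : Measure E)))) :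
    Tendsto (fun i => wassersteinDist p (μ i : Measure E) ν) l (𝓝 0) := by
  simp only [wassersteinDist_eq_transportCost]
  have hcost := (ENNReal.tendsto_toReal ENNReal.zero_ne_top).comp
    (tendsto_transportCost_zero hp hμ hν hmom)
  have hroot := hcost.rpow_const (p := 1 / p) (.inr (by positivity))
  rwa [ENNReal.toReal_zero, Real.zero_rpow (by positivity)] at hroot

end WassersteinConvergence

section Approximation

variable {ι X : Type*} {l : Filter ι} [PseudoEMetricSpace X] [MeasurableSpace X]

lemma edist_integral_integral_comp_le [OpensMeasurableSpace X] {ρ : Measure X}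
    [IsProbabilityMeasure ρ] {T : X → X} (hT : Continuous T) (f : BoundedContinuousFunction X ℝ)
    {L : ℝ≥0} (hf : LipschitzWith L f) :
    edist (∫ x, f x ∂ρ) (∫ x, f (T x) ∂ρ) ≤ L * ∫⁻ x, edist x (T x) ∂ρ :=
  calc edist (∫ x, f x ∂ρ) (∫ x, f (T x) ∂ρ) ≤ ∫⁻ x, edist (f x) (f (T x)) ∂ρ :=
        edist_integral_le_lintegral_edist (f.integrable ρ)
          ((f.compContinuous ⟨T, hT⟩).integrable ρ)
    _ ≤ ∫⁻ x, L * edist x (T x) ∂ρ := lintegral_mono fun x => hf x (T x)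
    _ = L * ∫⁻ x, edist x (T x) ∂ρ := lintegral_const_mul' _ _ ENNReal.coe_ne_top

theorem tendsto_of_forall_exists_tendsto_map [BorelSpace X] [l.IsCountablyGenerated]
    {μ : ι → ProbabilityMeasure X} {ν : ProbabilityMeasure X}
    (h : ∀ ε : ℝ≥0∞, 0 < ε → ∃ (T : X → X) (hT : Continuous T),
      Tendsto (fun i => (μ i).map hT.aemeasurable) l (𝓝 (ν.map hT.aemeasurable)) ∧
      (∀ᶠ i in l, ∫⁻ x, edist x (T x) ∂(μ i : Measure X) ≤ ε) ∧
      ∫⁻ x, edist x (T x) ∂(ν : Measure X) ≤ ε) :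
    Tendsto μ l (𝓝 ν) := by
  rw [tendsto_iff_forall_lipschitz_integral_tendsto]
  rintro f₀ ⟨C, hC⟩ ⟨L, hL⟩
  let f : BoundedContinuousFunction X ℝ := .mkOfBound ⟨f₀, hL.continuous⟩ C hC
  change Tendsto (fun i => ∫ x, f x ∂(μ i : Measure X)) l (𝓝 (∫ x, f x ∂(ν : Measure X)))
  refine tendsto_iff_edist_tendsto_0.mpr (ENNReal.tendsto_nhds_zero.mpr fun ε hε => ?_)
  obtain ⟨T, hT, hmap, hμT, hνT⟩ := h (ε / (L + 1 + L))
    (ENNReal.div_pos hε.ne' (by finiteness))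
  set δ := ε / (L + 1 + L)
  have hδ : 0 < δ := ENNReal.div_pos hε.ne' (by finiteness)
  have hcomp : Tendsto (fun i => ∫ x, f (T x) ∂(μ i : Measure X)) l
      (𝓝 (∫ x, f (T x) ∂(ν : Measure X))) := by
    have hint := ProbabilityMeasure.tendsto_iff_forall_integral_tendsto.mp hmap f
    simpa only [ProbabilityMeasure.toMeasure_map,
      integral_map hT.aemeasurable f.continuous.aestronglyMeasurable] using hint
  filter_upwards [hμT, ENNReal.tendsto_nhds_zero.mp (tendsto_iff_edist_tendsto_0.mp hcomp) δ hδ]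
    with i hi hcomp_i
  calc edist (∫ x, f x ∂(μ i : Measure X)) (∫ x, f x ∂(ν : Measure X))
      ≤ edist (∫ x, f x ∂(μ i : Measure X)) (∫ x, f (T x) ∂(μ i : Measure X)) +
          edist (∫ x, f (T x) ∂(μ i : Measure X)) (∫ x, f (T x) ∂(ν : Measure X)) +
          edist (∫ x, f (T x) ∂(ν : Measure X)) (∫ x, f x ∂(ν : Measure X)) :=
        edist_triangle4 _ _ _ _
    _ ≤ L * δ + δ + L * δ := by
      rw [edist_comm (∫ x, f (T x) ∂(ν : Measure X))]
      exact add_le_add_three ((edist_integral_integral_comp_le hT f hL).trans (by gcongr)) hcomp_i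
        ((edist_integral_integral_comp_le hT f hL).trans (by gcongr))
    _ = (L + 1 + L) * δ := by ring
    _ ≤ ε := ENNReal.mul_div_le

end Approximation

section CharFun

lemma charFun_map_of_inner_eq {E F : Type*} [NormedAddCommGroup E] [InnerProductSpace ℝ E]
    [NormedAddCommGroup F] [InnerProductSpace ℝ F] [MeasurableSpace E]
    [MeasurableSpace F] [OpensMeasurableSpace F] [SecondCountableTopology F] (ρ : Measure E)
    {T : E → F} (hT : Measurable T) {t : F} {u : E} (h : ∀ x, ⟪T x, t⟫ = ⟪x, u⟫) :
    charFun (ρ.map T) t = charFun ρ u := by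
  rw [charFun_apply, charFun_apply, integral_map hT.aemeasurable (by fun_prop)]
  simp only [h]

end CharFun

section ProjectionLaws

variable {H : Type*} [NormedAddCommGroup H] [InnerProductSpace ℝ H]

lemma continuous_inner_left (u : H) : Continuous fun x : H => ⟪x, u⟫ :=
  continuous_id.inner continuous_const

variable [MeasurableSpace H] [BorelSpace H]
  {μ : ℕ → ProbabilityMeasure H} {ν : ProbabilityMeasure H}

theorem tendsto_charFun_of_tendsto_map_inner
    (hproj : ∀ u : H, ‖u‖ = 1 →
      Tendsto (fun n => (μ n).map (continuous_inner_left u).aemeasurable) atTop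
        (𝓝 (ν.map (continuous_inner_left u).aemeasurable))) (t : H) :
    Tendsto (fun n => charFun (μ n : Measure H) t) atTop (𝓝 (charFun (ν : Measure H) t)) := by
  obtain rfl | ht := eq_or_ne t 0
  · simp
  have hinner (x : H) : ⟪⟪x, ‖t‖⁻¹ • t⟫, ‖t‖⟫ = ⟪x, t⟫ := by
    simp [inner_smul_right, ht]
  have hchar (ρ : Measure H) :
      charFun (ρ.map fun x => ⟪x, ‖t‖⁻¹ • t⟫) ‖t‖ = charFun ρ t :=
    charFun_map_of_inner_eq ρ (continuous_inner_left _).measurable hinner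
  simpa only [ProbabilityMeasure.toMeasure_map, hchar] using
    ProbabilityMeasure.tendsto_iff_tendsto_charFun.mp
      (hproj (‖t‖⁻¹ • t) (norm_smul_inv_norm (𝕜 := ℝ) ht)) ‖t‖

theorem tendsto_map_starProjection_of_tendsto_charFun
    (h : ∀ t, Tendsto (fun n => charFun (μ n : Measure H) t) atTop
      (𝓝 (charFun (ν : Measure H) t)))
    (F : Submodule ℝ H) [FiniteDimensional ℝ F] :
    Tendsto (fun n => (μ n).map F.starProjection.continuous.aemeasurable) atTop
      (𝓝 (ν.map F.starProjection.continuous.aemeasurable)) := by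
  have hP : Continuous F.orthogonalProjectionOnto := F.orthogonalProjectionOnto.continuous
  have hF : Tendsto (fun n => (μ n).map hP.aemeasurable) atTop (𝓝 (ν.map hP.aemeasurable)) := by
    refine ProbabilityMeasure.tendsto_iff_tendsto_charFun.mpr fun t => ?_
    have hchar (ρ : Measure H) : charFun (ρ.map F.orthogonalProjectionOnto) t = charFun ρ t :=
      charFun_map_of_inner_eq ρ hP.measurable fun x => by simp
    simpa only [ProbabilityMeasure.toMeasure_map, hchar] using h t
  have hcomp (ρ : ProbabilityMeasure H) :
      (ρ.map hP.aemeasurable).map continuous_subtype_val.aemeasurable =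
        ρ.map F.starProjection.continuous.aemeasurable :=
    Subtype.ext (Measure.map_map measurable_subtype_coe hP.measurable)
  simpa only [hcomp] using
    ProbabilityMeasure.tendsto_map_of_tendsto_of_continuous _ _ hF continuous_subtype_val

end ProjectionLaws

section Projections

variable {H : Type*} [NormedAddCommGroup H] [InnerProductSpace ℝ H]

lemma exists_finiteDimensional_starProjection_tendsto (H : Type*) [NormedAddCommGroup H]
    [InnerProductSpace ℝ H] [TopologicalSpace.SeparableSpace H] :
    ∃ (F : ℕ → Submodule ℝ H) (_ : ∀ k, FiniteDimensional ℝ (F k)),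
      ∀ x, Tendsto (fun k => (F k).starProjection x) atTop (𝓝 x) := by
  let z := TopologicalSpace.denseSeq H
  let F : ℕ → Submodule ℝ H := fun k => Submodule.span ℝ (z '' Set.Iio k)
  have hfin (k : ℕ) : FiniteDimensional ℝ (F k) :=
    FiniteDimensional.span_of_finite ℝ ((Set.finite_Iio k).image z)
  have hmono : Monotone F := fun a b hab =>
    Submodule.span_mono (Set.image_mono (Set.Iio_subset_Iio hab))
  have hmem : Set.range z ⊆ (⨆ k, F k : Submodule ℝ H) := by
    rintro _ ⟨j, rfl⟩
    exact le_iSup F (j + 1) (Submodule.subset_span ⟨j, by simp, rfl⟩)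
  exact ⟨F, hfin, fun x => Submodule.starProjection_tendsto_self F hmono x fun y _ =>
    closure_mono hmem (TopologicalSpace.denseRange_denseSeq H y)⟩

lemma min_nnnorm_starProjection_sq_le (F : Submodule ℝ H) [F.HasOrthogonalProjection] (x : H)
    (R : ℝ≥0) : min ((‖F.starProjection x‖₊ : ℝ≥0∞) ^ 2) R ≤ (‖x‖₊ : ℝ≥0∞) ^ 2 := by
  have hle : ‖F.starProjection x‖₊ ≤ ‖x‖₊ := F.norm_starProjection_apply_le x
  exact (min_le_left _ _).trans (by gcongr)

lemma nnnorm_sub_starProjection_sq (F : Submodule ℝ H) [F.HasOrthogonalProjection] (x : H) :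
    ‖x - F.starProjection x‖₊ ^ 2 = ‖x‖₊ ^ 2 - ‖F.starProjection x‖₊ ^ 2 := by
  have h := Submodule.norm_sq_eq_add_norm_sq_starProjection x F
  rw [Submodule.starProjection_orthogonal_val] at h
  refine eq_tsub_of_add_eq (NNReal.eq ?_)
  push_cast
  rw [h, add_comm]

end Projections

section Tightness

variable {H : Type*} [NormedAddCommGroup H] [InnerProductSpace ℝ H] [MeasurableSpace H]
  [BorelSpace H]

lemma lintegral_nnnorm_sub_starProjection_sq_le (F : Submodule ℝ H) [F.HasOrthogonalProjection]
    (ρ : Measure H) [IsFiniteMeasure ρ] (R : ℝ≥0) :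
    ∫⁻ x, (‖x - F.starProjection x‖₊ : ℝ≥0∞) ^ 2 ∂ρ ≤
      ∫⁻ x, (‖x‖₊ : ℝ≥0∞) ^ 2 ∂ρ - ∫⁻ x, min ((‖F.starProjection x‖₊ : ℝ≥0∞) ^ 2) R ∂ρ := by
  have hmeas : Measurable fun x => min ((‖F.starProjection x‖₊ : ℝ≥0∞) ^ 2) R := by
    have := F.starProjection.continuous
    exact Continuous.measurable (by fun_prop)
  rw [← lintegral_sub hmeas (lintegral_min_const_ne_top _ R)
    (ae_of_all _ fun x => min_nnnorm_starProjection_sq_le F x R)]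
  refine lintegral_mono fun x => ?_
  calc (‖x - F.starProjection x‖₊ : ℝ≥0∞) ^ 2
      = (‖x‖₊ : ℝ≥0∞) ^ 2 - (‖F.starProjection x‖₊ : ℝ≥0∞) ^ 2 := by
        exact_mod_cast congrArg ENNReal.ofNNReal (nnnorm_sub_starProjection_sq F x)
    _ ≤ (‖x‖₊ : ℝ≥0∞) ^ 2 - min ((‖F.starProjection x‖₊ : ℝ≥0∞) ^ 2) R :=
        tsub_le_tsub_left (min_le_left _ _) _

lemma tendsto_lintegral_min_starProjection_sq {F : ℕ → Submodule ℝ H}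
    [∀ k, (F k).HasOrthogonalProjection]
    (hF : ∀ x, Tendsto (fun k => (F k).starProjection x) atTop (𝓝 x)) {ρ : Measure H}
    (hρ : ∫⁻ x, (‖x‖₊ : ℝ≥0∞) ^ 2 ∂ρ ≠ ∞) :
    Tendsto (fun k : ℕ => ∫⁻ x, min ((‖(F k).starProjection x‖₊ : ℝ≥0∞) ^ 2) (k : ℝ≥0) ∂ρ) atTop
      (𝓝 (∫⁻ x, (‖x‖₊ : ℝ≥0∞) ^ 2 ∂ρ)) := by
  refine tendsto_lintegral_of_dominated_convergence (fun x => (‖x‖₊ : ℝ≥0∞) ^ 2) (fun k => ?_)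
    (fun k => ae_of_all _ fun x => min_nnnorm_starProjection_sq_le (F k) x k) hρ
    (ae_of_all _ fun x => ?_)
  · have := (F k).starProjection.continuous
    exact Continuous.measurable (by fun_prop)
  · have hsq : Tendsto (fun k => (‖(F k).starProjection x‖₊ : ℝ≥0∞) ^ 2) atTop
        (𝓝 ((‖x‖₊ : ℝ≥0∞) ^ 2)) :=
      ENNReal.Tendsto.pow (ENNReal.tendsto_coe.mpr (hF x).nnnorm)
    have htop : Tendsto (fun k : ℕ => ((k : ℝ≥0) : ℝ≥0∞)) atTop (𝓝 ∞) := by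
      simpa using ENNReal.tendsto_nat_nhds_top
    simpa using hsq.min htop

variable {μ : ℕ → ProbabilityMeasure H} {ν : ProbabilityMeasure H}

theorem exists_finiteDimensional_lintegral_nnnorm_sub_starProjection_sq_le
    [TopologicalSpace.SeparableSpace H]
    (hmap : ∀ (F : Submodule ℝ H) [FiniteDimensional ℝ F],
      Tendsto (fun n => (μ n).map F.starProjection.continuous.aemeasurable) atTop
        (𝓝 (ν.map F.starProjection.continuous.aemeasurable)))
    (hν : ∫⁻ x, (‖x‖₊ : ℝ≥0∞) ^ 2 ∂(ν : Measure H) ≠ ∞)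
    (hmom : Tendsto (fun n => ∫⁻ x, (‖x‖₊ : ℝ≥0∞) ^ 2 ∂(μ n : Measure H)) atTop
      (𝓝 (∫⁻ x, (‖x‖₊ : ℝ≥0∞) ^ 2 ∂(ν : Measure H))))
    {ε : ℝ≥0∞} (hε : 0 < ε) :
    ∃ (F : Submodule ℝ H) (_ : FiniteDimensional ℝ F),
      (∀ᶠ n in atTop, ∫⁻ x, (‖x - F.starProjection x‖₊ : ℝ≥0∞) ^ 2 ∂(μ n : Measure H) ≤ ε) ∧
      ∫⁻ x, (‖x - F.starProjection x‖₊ : ℝ≥0∞) ^ 2 ∂(ν : Measure H) ≤ ε := by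
  obtain ⟨F, hF, hlim⟩ := exists_finiteDimensional_starProjection_tendsto H
  have hdefect := ENNReal.Tendsto.sub tendsto_const_nhds
    (tendsto_lintegral_min_starProjection_sq hlim hν) (.inl hν)
  rw [tsub_self] at hdefect
  obtain ⟨k, hk⟩ := (hdefect.eventually_lt_const hε).exists
  have hP := (F k).starProjection.continuous
  have htrunc : Tendsto
      (fun n => ∫⁻ x, min ((‖(F k).starProjection x‖₊ : ℝ≥0∞) ^ 2) (k : ℝ≥0) ∂(μ n : Measure H))
      atTop
      (𝓝 (∫⁻ x, min ((‖(F k).starProjection x‖₊ : ℝ≥0∞) ^ 2) (k : ℝ≥0) ∂(ν : Measure H))) := by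
    have hmeas : Measurable fun x : H => min ((‖x‖₊ : ℝ≥0∞) ^ 2) (k : ℝ≥0) := by fun_prop
    have hsq : Continuous fun x : H => ‖x‖₊ ^ 2 := by fun_prop
    simpa only [ENNReal.coe_pow, ProbabilityMeasure.toMeasure_map,
      lintegral_map hmeas hP.measurable] using tendsto_lintegral_min_of_tendsto (hmap (F k)) hsq k
  refine ⟨F k, hF k, ?_, (lintegral_nnnorm_sub_starProjection_sq_le (F k) _ k).trans hk.le⟩
  filter_upwards [(ENNReal.Tendsto.sub hmom htrunc (.inl hν)).eventually_lt_const hk] with n hn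
  exact (lintegral_nnnorm_sub_starProjection_sq_le (F k) _ k).trans hn.le

end Tightness

section WeakConvergenceHilbert

lemma sq_lintegral_le_lintegral_sq {X : Type*} [MeasurableSpace X] {ρ : Measure X}
    [IsProbabilityMeasure ρ] {f : X → ℝ≥0∞} (hf : AEMeasurable f ρ) :
    (∫⁻ x, f x ∂ρ) ^ 2 ≤ ∫⁻ x, f x ^ 2 ∂ρ := by
  have h := eLpNorm'_le_eLpNorm'_of_exponent_le one_pos one_le_two ρ hf.aestronglyMeasurable
  have hroot : ∫⁻ x, f x ∂ρ ≤ (∫⁻ x, f x ^ 2 ∂ρ) ^ (1 / 2 : ℝ) := by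
    simpa [eLpNorm'] using h
  calc (∫⁻ x, f x ∂ρ) ^ 2 ≤ ((∫⁻ x, f x ^ 2 ∂ρ) ^ (1 / 2 : ℝ)) ^ 2 := by gcongr
    _ = ∫⁻ x, f x ^ 2 ∂ρ := by rw [← ENNReal.rpow_mul_natCast]; norm_num

variable {H : Type*} [NormedAddCommGroup H] [InnerProductSpace ℝ H]
  [TopologicalSpace.SeparableSpace H] [MeasurableSpace H] [BorelSpace H]
  {μ : ℕ → ProbabilityMeasure H} {ν : ProbabilityMeasure H}

theorem tendsto_of_tendsto_map_starProjection
    (hmap : ∀ (F : Submodule ℝ H) [FiniteDimensional ℝ F],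
      Tendsto (fun n => (μ n).map F.starProjection.continuous.aemeasurable) atTop
        (𝓝 (ν.map F.starProjection.continuous.aemeasurable)))
    (hν : ∫⁻ x, (‖x‖₊ : ℝ≥0∞) ^ 2 ∂(ν : Measure H) ≠ ∞)
    (hmom : Tendsto (fun n => ∫⁻ x, (‖x‖₊ : ℝ≥0∞) ^ 2 ∂(μ n : Measure H)) atTop
      (𝓝 (∫⁻ x, (‖x‖₊ : ℝ≥0∞) ^ 2 ∂(ν : Measure H)))) :
    Tendsto μ atTop (𝓝 ν) := by
  refine tendsto_of_forall_exists_tendsto_map fun ε hε => ?_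
  obtain ⟨F, hF, hμF, hνF⟩ := exists_finiteDimensional_lintegral_nnnorm_sub_starProjection_sq_le
    hmap hν hmom (ENNReal.pow_pos hε 2)
  have hP := F.starProjection.continuous
  have hL1 (ρ : ProbabilityMeasure H)
      (hρ : ∫⁻ x, (‖x - F.starProjection x‖₊ : ℝ≥0∞) ^ 2 ∂(ρ : Measure H) ≤ ε ^ 2) :
      ∫⁻ x, edist x (F.starProjection x) ∂(ρ : Measure H) ≤ ε := by
    simp only [edist_eq_enorm_sub, enorm_eq_nnnorm]
    have hmeas : Measurable fun x => (‖x - F.starProjection x‖₊ : ℝ≥0∞) :=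
      Continuous.measurable (by fun_prop)
    exact (ENNReal.pow_le_pow_left_iff two_ne_zero).mp
      ((sq_lintegral_le_lintegral_sq hmeas.aemeasurable).trans hρ)
  exact ⟨F.starProjection, hP, hmap F, hμF.mono fun n => hL1 (μ n), hL1 ν hνF⟩

end WeakConvergenceHilbert

section SecondMoment

lemma HasFiniteMoment.lintegral_nnnorm_sq {E : Type*} [NormedAddCommGroup E] [MeasurableSpace E]
    [OpensMeasurableSpace E] {ρ : Measure E} (hρ : HasFiniteMoment 2 ρ) :
    ∫⁻ x, (‖x‖₊ : ℝ≥0∞) ^ 2 ∂ρ = ENNReal.ofReal (∫ x, ‖x‖ ^ 2 ∂ρ) := by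
  have hsq (x : E) : ENNReal.ofReal (‖x‖ ^ 2) = (‖x‖₊ : ℝ≥0∞) ^ 2 := by
    rw [ENNReal.ofReal_pow (norm_nonneg x), ofReal_norm, enorm_eq_nnnorm]
  have hnonneg : 0 ≤ᵐ[ρ] fun x : E => ‖x‖ ^ 2 := ae_of_all _ fun x => sq_nonneg ‖x‖
  have hint : Integrable (fun x : E => ‖x‖ ^ 2) ρ := by
    refine (lintegral_ofReal_ne_top_iff_integrable
      (Measurable.aestronglyMeasurable (by fun_prop)) hnonneg).mp ?_
    simpa only [hsq, HasFiniteMoment, ENNReal.rpow_ofNat] using hρ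
  rw [ofReal_integral_eq_lintegral_ofReal hint hnonneg]
  simp only [hsq]

variable {H : Type*} [NormedAddCommGroup H] [InnerProductSpace ℝ H]
  [TopologicalSpace.SeparableSpace H] [MeasurableSpace H] [BorelSpace H]

theorem stmt11_general (μ : ℕ → Measure H) (μ' : Measure H)
    [∀ n, IsProbabilityMeasure (μ n)] [IsProbabilityMeasure μ']
    (hμ : ∀ n, HasFiniteMoment 2 (μ n)) (hμ' : HasFiniteMoment 2 μ')
    (hmom : Tendsto (fun n => ∫ ξ, ‖ξ‖ ^ 2 ∂(μ n)) atTop (𝓝 (∫ ξ, ‖ξ‖ ^ 2 ∂μ')))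
    (hproj : ∀ u : H, ‖u‖ = 1 → ∀ g : BoundedContinuousFunction ℝ ℝ,
      Tendsto (fun n => ∫ t, g t ∂((μ n).map fun ξ => ⟪ξ, u⟫)) atTop
        (𝓝 (∫ t, g t ∂(μ'.map fun ξ => ⟪ξ, u⟫)))) :
    Tendsto (fun n => wassersteinDist 2 (μ n) μ') atTop (𝓝 0) := by
  let ρ : ℕ → ProbabilityMeasure H := fun n => ⟨μ n, inferInstance⟩
  let ρ' : ProbabilityMeasure H := ⟨μ', inferInstance⟩
  have hν : ∫⁻ x, (‖x‖₊ : ℝ≥0∞) ^ 2 ∂μ' ≠ ∞ := by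
    simpa only [HasFiniteMoment, ENNReal.rpow_ofNat] using hμ'
  have hmom_lintegral : Tendsto (fun n => ∫⁻ x, (‖x‖₊ : ℝ≥0∞) ^ 2 ∂(μ n)) atTop
      (𝓝 (∫⁻ x, (‖x‖₊ : ℝ≥0∞) ^ 2 ∂μ')) := by
    simpa only [(hμ _).lintegral_nnnorm_sq, hμ'.lintegral_nnnorm_sq] using
      ENNReal.tendsto_ofReal hmom
  have hinner (u : H) (hu : ‖u‖ = 1) :
      Tendsto (fun n => (ρ n).map (continuous_inner_left u).aemeasurable) atTop
        (𝓝 (ρ'.map (continuous_inner_left u).aemeasurable)) :=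
    ProbabilityMeasure.tendsto_iff_forall_integral_tendsto.mpr (hproj u hu)
  have hweak : Tendsto ρ atTop (𝓝 ρ') :=
    tendsto_of_tendsto_map_starProjection (ν := ρ')
      (tendsto_map_starProjection_of_tendsto_charFun (tendsto_charFun_of_tendsto_map_inner hinner))
      hν hmom_lintegral
  exact tendsto_wassersteinDist_zero (μ := ρ) (ν := ρ') two_pos hweak hμ'
    (by simpa only [ENNReal.rpow_ofNat, ρ, ρ', ProbabilityMeasure.coe_mk] using hmom_lintegral)

end SecondMoment

/-- on a separable Hilbert space, if the second moments of `μ_n` converge to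
that of `μ_∞` and for every unit vector `u` the pushforwards of `μ_n` under `ξ ↦ ⟪ξ, u⟫`
converge weakly on `ℝ` to the pushforward of `μ_∞`, then `W₂(μ_n, μ_∞) → 0`. -/
theorem stmt11 {H : Type*} [NormedAddCommGroup H] [InnerProductSpace ℝ H]
    [CompleteSpace H] [TopologicalSpace.SeparableSpace H]
    [MeasurableSpace H] [BorelSpace H]
    (μ : ℕ → Measure H) (μ' : Measure H)
    [∀ n, IsProbabilityMeasure (μ n)] [IsProbabilityMeasure μ']
    (hμ : ∀ n, HasFiniteMoment 2 (μ n)) (hμ' : HasFiniteMoment 2 μ')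
    (hmom : Tendsto (fun n => ∫ ξ, ‖ξ‖ ^ 2 ∂(μ n)) atTop (𝓝 (∫ ξ, ‖ξ‖ ^ 2 ∂μ')))
    (hproj : ∀ u : H, ‖u‖ = 1 → ∀ g : BoundedContinuousFunction ℝ ℝ,
      Tendsto (fun n => ∫ t, g t ∂((μ n).map fun ξ => ⟪ξ, u⟫)) atTop
        (𝓝 (∫ t, g t ∂(μ'.map fun ξ => ⟪ξ, u⟫)))) :
    Tendsto (fun n => wassersteinDist 2 (μ n) μ') atTop (𝓝 0) :=
  stmt11_general μ μ' hμ hμ' hmom hproj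
end

section
/- (À la Paul Lévy characterization in Hilbert space.) Let H be a separable Hilbert space, let (μ_n)_{n≥1} be Borel probability measures on H with finite second moments, and let f : H² → ℝ₊ be such that e_{2,2}(μ_n, ·) → f pointwise on H². Then there exists a Borel probability measure μ_∞ on H with finite second moment such that μ_n converges to μ_∞ in distribution with respect to the weak topology of H, the limit L := lim_n ∫_H ‖ξ‖² dμ_n(ξ) exists and is finite, and f(x)² = e_{2,2}(μ_∞, x)² + L − ∫_H ‖ξ‖² dμ_∞(ξ) for every x ∈ H². -/
/-
Write `quantErr 2 N P x ^ 2 = ∫ ‖ξ‖² ∂P - ∫ gₓ ∂P` with `gₓ(ξ) = maxᵢ (2⟪ξ, xᵢ⟫ - ‖xᵢ‖²)`. The grid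
`x = 0` makes the second moments of `μ n` converge, hence the integrals of every `gₓ` converge too.
Closed balls being weakly compact, the laws are tight for the weak topology, and since `gₓ` is
weakly continuous of linear growth, its integrals pass to weak cluster points. A law with finite
second moment is determined by its integrals of the `gₓ`: for `x` with two values `a`, `b` they give
`∫ max(⟪ξ, u⟫ - c, 0)` for all `u`, `c`, whose derivatives in `c` are the tails of the
one-dimensional marginals. So there is only one cluster point, the limit `μ'`.
-/

open MeasureTheory Filter Topology
open scoped ENNReal NNReal

/-- The `L^p`-quantization error function at level `N`. -/
noncomputable def quantErr {E : Type*} [NormedAddCommGroup E] [MeasurableSpace E]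
    (p : ℝ) (N : ℕ) (μ : Measure E) (x : Fin N → E) : ℝ :=
  (∫⁻ ξ, ⨅ i, (‖ξ - x i‖₊ : ℝ≥0∞) ^ p ∂μ).toReal ^ (1 / p)

section WeakConvergence

variable {X ι : Type*} [TopologicalSpace X] [MeasurableSpace X] [OpensMeasurableSpace X]
  {l : Filter ι} {μ : ι → ProbabilityMeasure X} {ν : ProbabilityMeasure X}

lemma lintegral_iSup_le_of_frequently_le (hμν : Tendsto μ l (𝓝 ν)) {φ : ℕ → X → ℝ≥0}
    (hφ : ∀ k, Continuous (φ k)) {C : ℝ≥0∞}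
    (hC : ∃ᶠ i in l, ∫⁻ x, ⨆ k, (φ k x : ℝ≥0∞) ∂(μ i : Measure X) ≤ C) :
    ∫⁻ x, ⨆ k, (φ k x : ℝ≥0∞) ∂(ν : Measure X) ≤ C := by
  let ψ (n : ℕ) : BoundedContinuousFunction X ℝ≥0 :=
    .mkOfBound ⟨fun x => min n (partialSups (φ · x) n),
      continuous_const.min (.partialSups_apply fun k _ => hφ k)⟩ n fun x y => by
        rw [NNReal.dist_eq, abs_sub_le_iff]
        constructor <;>
          exact sub_le_iff_le_add.2 ((NNReal.coe_le_coe.2 (min_le_left _ _)).trans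
            (le_add_of_nonneg_right (NNReal.coe_nonneg _)))
  have hψ_le (n : ℕ) (x : X) : (ψ n x : ℝ≥0∞) ≤ ⨆ k, (φ k x : ℝ≥0∞) := by
    obtain ⟨k, -, hk⟩ := exists_partialSups_eq (φ · x) n
    calc (ψ n x : ℝ≥0∞) ≤ φ k x := by
          rw [← hk]; exact_mod_cast min_le_right _ _
      _ ≤ ⨆ k, (φ k x : ℝ≥0∞) := le_iSup (fun k => (φ k x : ℝ≥0∞)) k
  have hφ_le (k : ℕ) (x : X) : (φ k x : ℝ≥0∞) ≤ ⨆ n, (ψ n x : ℝ≥0∞) := by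
    obtain ⟨m, hm⟩ := exists_nat_ge (φ k x)
    refine le_iSup_of_le (max k m) (ENNReal.coe_le_coe.2 (le_min ?_ ?_))
    · exact hm.trans (by exact_mod_cast le_max_right k m)
    · exact le_partialSups_of_le (φ · x) (le_max_left k m)
  have hψ_mono : Monotone fun n x => (ψ n x : ℝ≥0∞) := fun m n hmn x =>
    ENNReal.coe_le_coe.2 (min_le_min (by exact_mod_cast hmn) ((partialSups (φ · x)).monotone hmn))
  have hiSup (x : X) : ⨆ k, (φ k x : ℝ≥0∞) = ⨆ n, (ψ n x : ℝ≥0∞) :=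
    le_antisymm (iSup_le (hφ_le · x)) (iSup_le (hψ_le · x))
  calc ∫⁻ x, ⨆ k, (φ k x : ℝ≥0∞) ∂(ν : Measure X)
      = ⨆ n, ∫⁻ x, ψ n x ∂(ν : Measure X) := by
        simp only [hiSup]
        exact lintegral_iSup (fun n => (ψ n).continuous.measurable.coe_nnreal_ennreal) hψ_mono
    _ ≤ C := iSup_le fun n =>
        le_of_tendsto_of_frequently
          (ProbabilityMeasure.tendsto_iff_forall_lintegral_tendsto.1 hμν (ψ n))
          (hC.mono fun i hi => (lintegral_mono (hψ_le n)).trans hi)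

lemma integrable_and_integral_le_of_frequently (hμν : Tendsto μ l (𝓝 ν)) {f : X → ℝ}
    (hf : Continuous f) (hf₀ : 0 ≤ f) {C : ℝ}
    (hC : ∃ᶠ i in l, Integrable f (μ i : Measure X) ∧ ∫ x, f x ∂(μ i : Measure X) ≤ C) :
    Integrable f (ν : Measure X) ∧ ∫ x, f x ∂(ν : Measure X) ≤ C := by
  have hC₀ : 0 ≤ C := by
    obtain ⟨i, -, hi⟩ := hC.exists
    exact (integral_nonneg hf₀).trans hi
  have hle : ∫⁻ x, ENNReal.ofReal (f x) ∂(ν : Measure X) ≤ ENNReal.ofReal C := by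
    have := lintegral_iSup_le_of_frequently_le hμν (φ := fun _ x => (f x).toNNReal)
      (fun _ => continuous_real_toNNReal.comp hf) (C := ENNReal.ofReal C)
    simp only [ciSup_const] at this
    refine this (hC.mono fun i hi => ?_)
    exact (ofReal_integral_eq_lintegral_ofReal hi.1 (ae_of_all _ hf₀)).symm.trans_le
      (ENNReal.ofReal_le_ofReal hi.2)
  have hfν : Integrable f (ν : Measure X) :=
    ⟨hf.measurable.aestronglyMeasurable, (hasFiniteIntegral_iff_ofReal (ae_of_all _ hf₀)).2
      (hle.trans_lt ENNReal.ofReal_lt_top)⟩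
  refine ⟨hfν, (ENNReal.ofReal_le_ofReal_iff hC₀).1 ?_⟩
  rwa [ofReal_integral_eq_lintegral_ofReal hfν (ae_of_all _ hf₀)]

lemma integral_add_const_sq {X : Type*} [MeasurableSpace X] {P : Measure X}
    [IsProbabilityMeasure P] {f : X → ℝ} (hf : Integrable f P)
    (hf₂ : Integrable (fun x => f x ^ 2) P) (r : ℝ) :
    ∫ x, (f x + r) ^ 2 ∂P = ∫ x, f x ^ 2 ∂P + 2 * r * ∫ x, f x ∂P + r ^ 2 := by
  have hexpand (x : X) : (f x + r) ^ 2 = f x ^ 2 + 2 * r * f x + r ^ 2 := by ring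
  have hlin : Integrable (fun x => f x ^ 2 + 2 * r * f x) P := hf₂.add (hf.const_mul _)
  simp only [hexpand]
  rw [integral_add hlin (integrable_const _),
    integral_add hf₂ (hf.const_mul _), integral_const_mul, integral_const, probReal_univ, one_smul]

lemma integrable_of_integrable_sq {X : Type*} [MeasurableSpace X] {P : Measure X}
    [IsFiniteMeasure P] {f : X → ℝ} (hf : AEStronglyMeasurable f P)
    (hf₂ : Integrable (fun x => f x ^ 2) P) : Integrable f P :=
  ((memLp_two_iff_integrable_sq hf).2 hf₂).integrable one_le_two

/- Since `(f + r) ^ 2 ≥ 0`, Fatou's lemma gives `2 * r * ∫ f ∂ν ≤ C + 2 * r * a` for all `r`. -/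
lemma integral_le_of_frequently_integral_le (hμν : Tendsto μ l (𝓝 ν)) {f : X → ℝ}
    (hf : Continuous f) {a C : ℝ}
    (hC : ∀ᶠ i in l, Integrable (fun x => f x ^ 2) (μ i : Measure X) ∧
      ∫ x, f x ^ 2 ∂(μ i : Measure X) ≤ C)
    (ha : ∃ᶠ i in l, ∫ x, f x ∂(μ i : Measure X) ≤ a) :
    ∫ x, f x ∂(ν : Measure X) ≤ a := by
  have hfm (P : Measure X) : AEStronglyMeasurable f P := hf.measurable.aestronglyMeasurable
  have hf₂ : Integrable (fun x => f x ^ 2) (ν : Measure X) :=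
    (integrable_and_integral_le_of_frequently hμν (hf.pow 2) (fun x => sq_nonneg (f x))
      ((ha.and_eventually hC).mono fun i hi => hi.2)).1
  have hkey (r : ℝ) (hr : 0 < r) : 2 * r * (∫ x, f x ∂(ν : Measure X) - a) ≤ C := by
    have hle : ∫ x, (f x + r) ^ 2 ∂(ν : Measure X) ≤ C + 2 * r * a + r ^ 2 := by
      refine (integrable_and_integral_le_of_frequently hμν
        (f := fun x => (f x + r) ^ 2) (by fun_prop) (fun x => sq_nonneg (f x + r))
        ((ha.and_eventually hC).mono ?_)).2
      rintro i ⟨hi, hi₂, hiC⟩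
      refine ⟨(((memLp_two_iff_integrable_sq (hfm _)).2 hi₂).add (memLp_const r)).integrable_sq, ?_⟩
      rw [integral_add_const_sq (integrable_of_integrable_sq (hfm _) hi₂) hi₂]
      gcongr
    rw [integral_add_const_sq (integrable_of_integrable_sq (hfm _) hf₂) hf₂] at hle
    have : 0 ≤ ∫ x, f x ^ 2 ∂(ν : Measure X) := integral_nonneg fun x => sq_nonneg (f x)
    linarith
  by_contra! hlt
  have hpos : 0 < ∫ x, f x ∂(ν : Measure X) - a := sub_pos.2 hlt
  have := hkey ((|C| + 1) / (2 * (∫ x, f x ∂(ν : Measure X) - a)))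
    (div_pos (by positivity) (mul_pos two_pos hpos))
  field_simp at this
  linarith [le_abs_self C]

lemma tendsto_integral_of_eventually_integral_sq_le (hμν : Tendsto μ l (𝓝 ν)) {f : X → ℝ}
    (hf : Continuous f) {C : ℝ}
    (hC : ∀ᶠ i in l, Integrable (fun x => f x ^ 2) (μ i : Measure X) ∧
      ∫ x, f x ^ 2 ∂(μ i : Measure X) ≤ C) :
    Tendsto (fun i => ∫ x, f x ∂(μ i : Measure X)) l (𝓝 (∫ x, f x ∂(ν : Measure X))) := by
  refine tendsto_order.2 ⟨fun a ha => ?_, fun a ha => ?_⟩ <;> by_contra h <;>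
    simp only [not_eventually, not_lt] at h
  · exact ha.not_ge (integral_le_of_frequently_integral_le hμν hf hC h)
  · refine ha.not_ge (neg_le_neg_iff.1 ?_)
    rw [← integral_neg]
    refine integral_le_of_frequently_integral_le hμν (f := fun x => -f x) hf.neg
      (by simpa using hC) (h.mono fun i hi => ?_)
    rw [integral_neg]
    exact neg_le_neg hi

lemma isTightMeasureSet_of_lintegral_le {X : Type*} [TopologicalSpace X] [MeasurableSpace X]
    {V : X → ℝ≥0∞} (hV : Measurable V) (hVK : ∀ r : ℝ≥0, IsCompact {x | V x ≤ r}) (C : ℝ≥0) :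
    IsTightMeasureSet {P : Measure X | ∫⁻ x, V x ∂P ≤ C} := by
  rw [isTightMeasureSet_iff_exists_isCompact_measure_compl_le]
  intro ε hε
  obtain ⟨n, hn⟩ := ENNReal.exists_nat_mul_gt hε.ne' (ENNReal.coe_ne_top (r := C))
  have hn₀ : (n : ℝ≥0∞) ≠ 0 := by rintro h; simp [h] at hn
  refine ⟨{x | V x ≤ n}, by simpa using hVK n, fun P hP => ?_⟩
  calc P {x | V x ≤ n}ᶜ ≤ P {x | n ≤ V x} :=
        measure_mono fun x (hx : ¬V x ≤ n) => (not_le.1 hx).le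
    _ ≤ (∫⁻ x, V x ∂P) / n :=
        meas_ge_le_lintegral_div hV.aemeasurable hn₀ (ENNReal.natCast_ne_top n)
    _ ≤ ε := ENNReal.div_le_of_le_mul' (hP.trans hn.le)

end WeakConvergence

section StopLoss

lemma tendsto_inv_mul_max_sub_max (x c : ℝ) :
    Tendsto (fun h => h⁻¹ * (max (x - (c - h)) 0 - max (x - c) 0)) (𝓝[>] 0)
      (𝓝 ((Set.Ici c).indicator 1 x)) := by
  refine tendsto_const_nhds.congr' ?_
  rcases lt_or_ge x c with hx | hx
  · filter_upwards [self_mem_nhdsWithin,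
      nhdsWithin_le_nhds (gt_mem_nhds (sub_pos.2 hx))] with h (h₀ : 0 < h) hh
    rw [Set.indicator_of_notMem (by simpa using hx), max_eq_right (by linarith),
      max_eq_right (by linarith), sub_self, mul_zero]
  · filter_upwards [self_mem_nhdsWithin] with h (h₀ : 0 < h)
    rw [Set.indicator_of_mem (by simpa using hx), max_eq_left (by linarith),
      max_eq_left (by linarith), Pi.one_apply]
    field_simp
    ring

lemma integrable_max_sub_const {P : Measure ℝ} [IsFiniteMeasure P] (hP : Integrable id P) (c : ℝ) :
    Integrable (fun x => max (x - c) 0) P :=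
  (hP.sub (integrable_const c)).pos_part

lemma tendsto_inv_mul_integral_max_sub_max {P : Measure ℝ} [IsFiniteMeasure P]
    (hP : Integrable id P) (c : ℝ) :
    Tendsto (fun h => h⁻¹ * (∫ x, max (x - (c - h)) 0 ∂P - ∫ x, max (x - c) 0 ∂P)) (𝓝[>] 0)
      (𝓝 (P.real (Set.Ici c))) := by
  have hint := integrable_max_sub_const hP
  simp only [← integral_sub (hint _) (hint _), ← integral_const_mul]
  rw [← integral_indicator_one measurableSet_Ici]
  refine tendsto_integral_filter_of_dominated_convergence 1
    (.of_forall fun h => (by fun_prop : Continuous _).aestronglyMeasurable) ?_ (integrable_const 1)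
    (ae_of_all _ (tendsto_inv_mul_max_sub_max · c))
  filter_upwards [self_mem_nhdsWithin] with h (h₀ : 0 < h)
  refine ae_of_all _ fun x => ?_
  have hLip := abs_max_sub_max_le_abs (x - (c - h)) (x - c) 0
  rw [show x - (c - h) - (x - c) = h by ring, abs_of_pos h₀] at hLip
  rw [Real.norm_eq_abs, abs_mul, abs_inv, abs_of_pos h₀]
  exact inv_mul_le_one_of_le₀ hLip h₀.le

theorem ext_of_integral_max_sub_const {P Q : Measure ℝ} [IsFiniteMeasure P] [IsFiniteMeasure Q]
    (hP : Integrable id P) (hQ : Integrable id Q)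
    (h : ∀ c : ℝ, ∫ x, max (x - c) 0 ∂P = ∫ x, max (x - c) 0 ∂Q) : P = Q := by
  refine Measure.ext_of_Ici P Q fun c => (measureReal_eq_measureReal_iff).1 ?_
  refine tendsto_nhds_unique (tendsto_inv_mul_integral_max_sub_max hP c) ?_
  simp only [h]
  exact tendsto_inv_mul_integral_max_sub_max hQ c

theorem ext_of_integral_max_strongDual_sub_const {E : Type*} [NormedAddCommGroup E]
    [NormedSpace ℝ E] [CompleteSpace E] [SecondCountableTopology E] [MeasurableSpace E]
    [BorelSpace E] {P Q : Measure E} [IsFiniteMeasure P] [IsFiniteMeasure Q]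
    (hP : Integrable id P) (hQ : Integrable id Q)
    (h : ∀ (L : StrongDual ℝ E) (c : ℝ), ∫ ξ, max (L ξ - c) 0 ∂P = ∫ ξ, max (L ξ - c) 0 ∂Q) :
    P = Q := by
  have hmap (L : StrongDual ℝ E) : P.map L = Q.map L := by
    have hL {S : Measure E} (hS : Integrable id S) : Integrable id (S.map L) :=
      (integrable_map_measure aestronglyMeasurable_id L.measurable.aemeasurable).2
        (L.integrable_comp hS)
    refine ext_of_integral_max_sub_const (hL hP) (hL hQ) fun c => ?_
    rw [integral_map L.measurable.aemeasurable (by fun_prop),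
      integral_map L.measurable.aemeasurable (by fun_prop), h]
  refine Measure.ext_of_charFunDual (funext fun L => ?_)
  rw [charFunDual_eq_charFun_map_one, charFunDual_eq_charFun_map_one, hmap]

end StopLoss

section WeakSpace

variable {E : Type*} [NormedAddCommGroup E] [NormedSpace ℝ E]

instance weakSpaceT2Space : T2Space (WeakSpace ℝ E) :=
  (NormedSpace.isEmbedding_inclusionInDoubleDualWeak ℝ E).t2Space

lemma isClosed_toWeakSpace_image_closedBall (x : E) (r : ℝ) :
    IsClosed (toWeakSpace ℝ E '' Metric.closedBall x r) := by
  rw [← closure_eq_iff_isClosed, ← (convex_closedBall x r).toWeakSpace_closure ℝ,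
    Metric.isClosed_closedBall.closure_eq]

lemma isCompact_toWeakSpace_image_closedBall
    (hE : Function.Surjective (NormedSpace.inclusionInDoubleDual ℝ E)) (x : E) (r : ℝ) :
    IsCompact (toWeakSpace ℝ E '' Metric.closedBall x r) := by
  rw [← (isClosed_toWeakSpace_image_closedBall x r).closure_eq]
  refine NormedSpace.isCompact_closure_of_isBounded ℝ E _ ?_ fun Φ _ => hE Φ
  rw [Set.preimage_image_eq _ (toWeakSpace ℝ E).injective]
  exact Metric.isBounded_closedBall

lemma surjective_inclusionInDoubleDual {H : Type*} [NormedAddCommGroup H] [InnerProductSpace ℝ H]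
    [CompleteSpace H] : Function.Surjective (NormedSpace.inclusionInDoubleDual ℝ H) := by
  intro Φ
  refine ⟨(InnerProductSpace.toDual ℝ H).symm
    (Φ ∘L ((InnerProductSpace.toDual ℝ H) : H →L⋆[ℝ] StrongDual ℝ H)), ?_⟩
  ext φ
  obtain ⟨u, rfl⟩ := (InnerProductSpace.toDual ℝ H).surjective φ
  rw [NormedSpace.dual_def, InnerProductSpace.toDual_apply_apply, real_inner_comm,
    InnerProductSpace.toDual_symm_apply]
  rfl

lemma measurableSet_toWeakSpace_image_of_isOpen [TopologicalSpace.SeparableSpace E]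
    [MeasurableSpace (WeakSpace ℝ E)] [OpensMeasurableSpace (WeakSpace ℝ E)] {U : Set E}
    (hU : IsOpen U) : MeasurableSet (toWeakSpace ℝ E '' U) := by
  have := UniformSpace.secondCountable_of_separable E
  have hball (x : E) (hx : x ∈ U) : ∃ r : ℝ, 0 < r ∧ Metric.closedBall x r ⊆ U :=
    Metric.nhds_basis_closedBall.mem_iff.1 (hU.mem_nhds hx)
  choose! r hr hrU using hball
  obtain ⟨t, htU, ht, hUt⟩ := TopologicalSpace.countable_cover_nhdsWithin
    fun x hx => mem_nhdsWithin_of_mem_nhds (Metric.closedBall_mem_nhds x (hr x hx))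
  have hU_eq : U = ⋃ x ∈ t, Metric.closedBall x (r x) :=
    hUt.antisymm (Set.iUnion₂_subset fun x hx => hrU x (htU hx))
  rw [hU_eq, Set.image_iUnion₂]
  exact .biUnion ht fun x _ => (isClosed_toWeakSpace_image_closedBall x (r x)).measurableSet

variable [MeasurableSpace E]

/-- The weak topology keeps the σ-algebra of `E`; for separable `E` it is the weak Borel one. -/
instance weakSpaceMeasurableSpace : MeasurableSpace (WeakSpace ℝ E) := ‹MeasurableSpace E›

instance weakSpaceBorelSpace [TopologicalSpace.SeparableSpace E] [BorelSpace E] :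
    BorelSpace (WeakSpace ℝ E) where
  measurable_eq := by
    refine le_antisymm ?_ (MeasurableSpace.generateFrom_le fun U hU => ?_)
    · refine (BorelSpace.measurable_eq (α := E)).le.trans (MeasurableSpace.generateFrom_le ?_)
      intro U hU
      let _ : MeasurableSpace (WeakSpace ℝ E) := borel _
      have : BorelSpace (WeakSpace ℝ E) := ⟨rfl⟩
      have himage : toWeakSpace ℝ E '' U = U := Set.image_id U
      exact himage ▸ measurableSet_toWeakSpace_image_of_isOpen hU
    · exact (hU.preimage (toWeakSpaceCLM ℝ E).continuous).measurableSet

/-- The measurable equivalence underlying `toWeakSpace`. -/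
noncomputable def toWeakSpaceMeasurableEquiv : E ≃ᵐ WeakSpace ℝ E where
  toEquiv := (toWeakSpace ℝ E).toEquiv
  measurable_toFun := measurable_id
  measurable_invFun := measurable_id

/-- A probability measure on `E`, regarded as a law on `E` with its weak topology, so that
convergence of such laws is convergence in distribution for the weak topology. -/
noncomputable def weakLaw (P : ProbabilityMeasure E) : ProbabilityMeasure (WeakSpace ℝ E) :=
  P.map toWeakSpaceMeasurableEquiv.measurable.aemeasurable

lemma integral_weakLaw (P : ProbabilityMeasure E) (g : WeakSpace ℝ E → ℝ) :
    ∫ ξ, g ξ ∂(weakLaw P : Measure (WeakSpace ℝ E)) =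
      ∫ ξ, g (toWeakSpace ℝ E ξ) ∂(P : Measure E) :=
  integral_map_equiv toWeakSpaceMeasurableEquiv g

lemma lintegral_weakLaw (P : ProbabilityMeasure E) (g : WeakSpace ℝ E → ℝ≥0∞) :
    ∫⁻ ξ, g ξ ∂(weakLaw P : Measure (WeakSpace ℝ E)) =
      ∫⁻ ξ, g (toWeakSpace ℝ E ξ) ∂(P : Measure E) :=
  lintegral_map_equiv g toWeakSpaceMeasurableEquiv

lemma integrable_weakLaw_iff {P : ProbabilityMeasure E} {g : WeakSpace ℝ E → ℝ} :
    Integrable g (weakLaw P : Measure (WeakSpace ℝ E)) ↔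
      Integrable (fun ξ => g (toWeakSpace ℝ E ξ)) (P : Measure E) :=
  integrable_map_equiv toWeakSpaceMeasurableEquiv g

lemma tendsto_integral_of_tendsto_weakLaw [TopologicalSpace.SeparableSpace E] [BorelSpace E]
    {ι : Type*} {l : Filter ι} {μ : ι → ProbabilityMeasure E} {ν : ProbabilityMeasure E}
    (hμν : Tendsto (fun i => weakLaw (μ i)) l (𝓝 (weakLaw ν))) {g : WeakSpace ℝ E → ℝ}
    (hg : Continuous g) {C : ℝ} (hC : ∀ ξ, |g ξ| ≤ C) :
    Tendsto (fun i => ∫ ξ, g (toWeakSpace ℝ E ξ) ∂(μ i : Measure E)) l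
      (𝓝 (∫ ξ, g (toWeakSpace ℝ E ξ) ∂(ν : Measure E))) := by
  simp only [← integral_weakLaw]
  exact ProbabilityMeasure.tendsto_iff_forall_integral_tendsto.1 hμν
    (.ofNormedAddCommGroup g hg C hC)

lemma weakLaw_surjective : Function.Surjective (weakLaw (E := E)) := by
  intro Q
  refine ⟨Q.map toWeakSpaceMeasurableEquiv.symm.measurable.aemeasurable, Subtype.ext ?_⟩
  exact toWeakSpaceMeasurableEquiv.map_map_symm (ν := (Q : Measure (WeakSpace ℝ E)))

lemma isTightMeasureSet_weakLaw [BorelSpace E]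
    (hE : Function.Surjective (NormedSpace.inclusionInDoubleDual ℝ E)) (C : ℝ≥0) :
    IsTightMeasureSet {((Q : ProbabilityMeasure (WeakSpace ℝ E)) : Measure (WeakSpace ℝ E)) |
      Q ∈ weakLaw '' {P : ProbabilityMeasure E | ∫⁻ ξ, ‖ξ‖ₑ ∂(P : Measure E) ≤ C}} := by
  refine (isTightMeasureSet_of_lintegral_le (V := fun ξ : WeakSpace ℝ E =>
    ‖(toWeakSpace ℝ E).symm ξ‖ₑ) ?_ ?_ C).subset ?_
  · exact toWeakSpaceMeasurableEquiv.symm.measurable.enorm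
  · intro r
    convert isCompact_toWeakSpace_image_closedBall hE 0 (r : ℝ) using 1
    rw [LinearEquiv.image_eq_preimage_symm]
    ext ξ
    simp [enorm_le_coe, ← NNReal.coe_le_coe]
  · rintro _ ⟨_, ⟨P, hP, rfl⟩, rfl⟩
    exact (lintegral_weakLaw P _).trans_le hP

theorem isCompact_closure_weakLaw [TopologicalSpace.SeparableSpace E] [BorelSpace E]
    (hE : Function.Surjective (NormedSpace.inclusionInDoubleDual ℝ E)) (C : ℝ≥0) :
    IsCompact (closure (weakLaw '' {P : ProbabilityMeasure E |
      ∫⁻ ξ, ‖ξ‖ₑ ∂(P : Measure E) ≤ C})) :=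
  isCompact_closure_of_isTightMeasureSet (isTightMeasureSet_weakLaw hE C)

end WeakSpace

section QuantGain

variable {H ι : Type*} [NormedAddCommGroup H] [InnerProductSpace ℝ H]

lemma two_mul_inner_sub_norm_sq (ξ u : H) :
    2 * inner ℝ ξ u - ‖u‖ ^ 2 = ‖ξ‖ ^ 2 - ‖ξ - u‖ ^ 2 := by
  rw [norm_sub_sq_real]; ring

lemma ciSup_comp_update_const {α β : Type*} [ConditionallyCompleteLinearOrder β] [Finite ι]
    [Nontrivial ι] [DecidableEq ι] (g : α → β) (i₀ : ι) (a b : α) :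
    ⨆ i, g (Function.update (fun _ => b) i₀ a i) = max (g a) (g b) := by
  have hbdd := (Set.finite_range fun i => g (Function.update (fun _ => b) i₀ a i)).bddAbove
  obtain ⟨i₁, hi₁⟩ := exists_ne i₀
  refine le_antisymm (ciSup_le fun i => ?_) (max_le ?_ ?_)
  · obtain rfl | hi := eq_or_ne i i₀
    · simp
    · simp [hi]
  · exact le_ciSup_of_le hbdd i₀ (by simp)
  · exact le_ciSup_of_le hbdd i₁ (by simp [hi₁])

/-- The reduction `‖ξ‖ ^ 2 - minᵢ ‖ξ - x i‖ ^ 2` of the squared distance when the origin is replaced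
by the grid `x`, written as a supremum of weakly continuous functions of `ξ`. -/
noncomputable def quantGain (x : ι → H) (ξ : H) : ℝ :=
  ⨆ i, (2 * inner ℝ ξ (x i) - ‖x i‖ ^ 2)

lemma norm_sq_sub_quantGain [Finite ι] [Nonempty ι] (x : ι → H) (ξ : H) :
    ‖ξ‖ ^ 2 - quantGain x ξ = ⨅ i, ‖ξ - x i‖ ^ 2 := by
  simp only [quantGain, two_mul_inner_sub_norm_sq]
  have hbdd := (Set.finite_range fun i => ‖ξ‖ ^ 2 - ‖ξ - x i‖ ^ 2).bddAbove
  calc ‖ξ‖ ^ 2 - ⨆ i, (‖ξ‖ ^ 2 - ‖ξ - x i‖ ^ 2)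
      = ⨅ i, (‖ξ‖ ^ 2 - (‖ξ‖ ^ 2 - ‖ξ - x i‖ ^ 2)) :=
        (OrderIso.subLeft (‖ξ‖ ^ 2)).map_ciSup hbdd
    _ = ⨅ i, ‖ξ - x i‖ ^ 2 := by simp only [sub_sub_cancel]

lemma quantGain_zero [Nonempty ι] (ξ : H) : quantGain (0 : ι → H) ξ = 0 := by
  simp [quantGain]

lemma continuous_weakSpace_inner (u : H) :
    Continuous fun ξ : WeakSpace ℝ H => (inner ℝ ((toWeakSpace ℝ H).symm ξ) u : ℝ) := by
  simp only [real_inner_comm u]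
  exact WeakBilin.eval_continuous (topDualPairing ℝ H).flip (innerSL ℝ u)

lemma continuous_weakSpace_quantGain [Finite ι] [Nonempty ι] (x : ι → H) :
    Continuous fun ξ : WeakSpace ℝ H => quantGain x ((toWeakSpace ℝ H).symm ξ) := by
  have := Fintype.ofFinite ι
  simp only [quantGain, ← Finset.sup'_univ_eq_ciSup]
  exact .finset_sup'_apply _ fun i _ =>
    ((continuous_weakSpace_inner (x i)).const_mul 2).sub continuous_const

lemma continuous_quantGain [Finite ι] [Nonempty ι] (x : ι → H) : Continuous (quantGain x) :=
  (continuous_weakSpace_quantGain x).comp (toWeakSpaceCLM ℝ H).continuous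

lemma abs_quantGain_le [Fintype ι] [Nonempty ι] (x : ι → H) (ξ : H) :
    |quantGain x ξ| ≤ 2 * ‖x‖ * ‖ξ‖ + ‖x‖ ^ 2 := by
  have hterm (i : ι) : |2 * inner ℝ ξ (x i) - ‖x i‖ ^ 2| ≤ 2 * ‖x‖ * ‖ξ‖ + ‖x‖ ^ 2 := by
    calc |2 * inner ℝ ξ (x i) - ‖x i‖ ^ 2| ≤ 2 * |inner ℝ ξ (x i)| + ‖x i‖ ^ 2 :=
          (abs_sub _ _).trans_eq (by simp [abs_mul])
      _ ≤ 2 * (‖ξ‖ * ‖x i‖) + ‖x i‖ ^ 2 := by gcongr; exact abs_real_inner_le_norm ξ (x i)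
      _ ≤ 2 * (‖ξ‖ * ‖x‖) + ‖x‖ ^ 2 := by gcongr <;> exact norm_le_pi_norm x i
      _ = 2 * ‖x‖ * ‖ξ‖ + ‖x‖ ^ 2 := by ring
  obtain ⟨i, hi⟩ := exists_eq_ciSup_of_finite (f := fun i => 2 * inner ℝ ξ (x i) - ‖x i‖ ^ 2)
  rw [quantGain, ← hi]
  exact hterm i

lemma quantGain_sq_le [Fintype ι] [Nonempty ι] (x : ι → H) (ξ : H) :
    quantGain x ξ ^ 2 ≤ 8 * ‖x‖ ^ 2 * ‖ξ‖ ^ 2 + 2 * ‖x‖ ^ 4 := by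
  calc quantGain x ξ ^ 2 ≤ (2 * ‖x‖ * ‖ξ‖ + ‖x‖ ^ 2) ^ 2 := sq_le_sq'
          (neg_le_of_abs_le (abs_quantGain_le x ξ)) (le_of_abs_le (abs_quantGain_le x ξ))
    _ ≤ 2 * ((2 * ‖x‖ * ‖ξ‖) ^ 2 + (‖x‖ ^ 2) ^ 2) := add_sq_le
    _ = 8 * ‖x‖ ^ 2 * ‖ξ‖ ^ 2 + 2 * ‖x‖ ^ 4 := by ring

lemma max_inner_sub_eq_quantGain_sub [Finite ι] [Nontrivial ι] [DecidableEq ι] (i₀ : ι) (ξ u : H)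
    (s : ℝ) :
    max (inner ℝ ξ u - s * ‖u‖ ^ 2) 0 =
      quantGain (Function.update (fun _ => (s - 1 / 4) • u) i₀ ((s + 1 / 4) • u)) ξ -
        quantGain (fun _ : ι => (s - 1 / 4) • u) ξ := by
  rw [quantGain, ciSup_comp_update_const (fun v => 2 * inner ℝ ξ v - ‖v‖ ^ 2), quantGain,
    ciSup_const, ← max_sub_sub_right, sub_self]
  congr 1
  simp only [inner_smul_right, norm_smul, mul_pow, Real.norm_eq_abs, sq_abs]
  ring

variable [MeasurableSpace H] [BorelSpace H]

lemma integrable_quantGain_sq {P : Measure H} [IsFiniteMeasure P] [Finite ι] [Nonempty ι]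
    (hP : Integrable (fun ξ => ‖ξ‖ ^ 2) P) (x : ι → H) :
    Integrable (fun ξ => quantGain x ξ ^ 2) P := by
  have := Fintype.ofFinite ι
  refine ((hP.const_mul (8 * ‖x‖ ^ 2)).add (integrable_const (2 * ‖x‖ ^ 4))).mono'
    ((continuous_quantGain x).pow 2).measurable.aestronglyMeasurable (ae_of_all _ fun ξ => ?_)
  rw [Real.norm_of_nonneg (sq_nonneg _)]
  exact quantGain_sq_le x ξ

lemma integrable_quantGain {P : Measure H} [IsFiniteMeasure P] [Finite ι] [Nonempty ι]
    (hP : Integrable (fun ξ => ‖ξ‖ ^ 2) P) (x : ι → H) : Integrable (quantGain x) P :=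
  integrable_of_integrable_sq (continuous_quantGain x).measurable.aestronglyMeasurable
    (integrable_quantGain_sq hP x)

theorem ext_of_integral_quantGain [CompleteSpace H] [TopologicalSpace.SeparableSpace H] [Finite ι]
    [Nontrivial ι] {P Q : Measure H} [IsProbabilityMeasure P] [IsProbabilityMeasure Q]
    (hP : Integrable (fun ξ => ‖ξ‖ ^ 2) P) (hQ : Integrable (fun ξ => ‖ξ‖ ^ 2) Q)
    (h : ∀ x : ι → H, ∫ ξ, quantGain x ξ ∂P = ∫ ξ, quantGain x ξ ∂Q) : P = Q := by
  classical
  have := UniformSpace.secondCountable_of_separable H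
  have hid {R : Measure H} [IsProbabilityMeasure R] (hR : Integrable (fun ξ => ‖ξ‖ ^ 2) R) :
      Integrable id R :=
    ((memLp_two_iff_integrable_sq_norm aestronglyMeasurable_id).2 hR).integrable one_le_two
  refine ext_of_integral_max_strongDual_sub_const (hid hP) (hid hQ) fun L c => ?_
  obtain ⟨u, rfl⟩ := (InnerProductSpace.toDual ℝ H).surjective L
  simp only [InnerProductSpace.toDual_apply_apply, real_inner_comm _ u]
  obtain rfl | hu := eq_or_ne u 0
  · simp
  have hc : c = c / ‖u‖ ^ 2 * ‖u‖ ^ 2 := by field_simp [norm_ne_zero_iff.2 hu]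
  obtain ⟨i₀⟩ : Nonempty ι := inferInstance
  rw [hc]
  simp only [max_inner_sub_eq_quantGain_sub i₀]
  rw [integral_sub (integrable_quantGain hP _) (integrable_quantGain hP _),
    integral_sub (integrable_quantGain hQ _) (integrable_quantGain hQ _), h, h]

end QuantGain

section SecondMoment

lemma lintegral_enorm_le_of_integral_norm_sq_le {E : Type*} [SeminormedAddCommGroup E]
    [MeasurableSpace E] {P : Measure E} [IsProbabilityMeasure P]
    (hP : Integrable (fun ξ => ‖ξ‖ ^ 2) P) {C : ℝ} (hC : ∫ ξ, ‖ξ‖ ^ 2 ∂P ≤ C) :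
    ∫⁻ ξ, ‖ξ‖ₑ ∂P ≤ (1 + C).toNNReal := by
  have hint : Integrable (fun ξ => 1 + ‖ξ‖ ^ 2) P := (integrable_const 1).add hP
  calc ∫⁻ ξ, ‖ξ‖ₑ ∂P ≤ ∫⁻ ξ, ENNReal.ofReal (1 + ‖ξ‖ ^ 2) ∂P := by
        refine lintegral_mono fun ξ => ?_
        rw [← ofReal_norm]
        exact ENNReal.ofReal_le_ofReal (by nlinarith [sq_nonneg (‖ξ‖ - 1)])
    _ = ENNReal.ofReal (1 + ∫ ξ, ‖ξ‖ ^ 2 ∂P) := by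
        rw [← ofReal_integral_eq_lintegral_ofReal hint (ae_of_all _ fun ξ => by positivity),
          integral_add (integrable_const 1) hP, integral_const, probReal_univ, one_smul]
    _ ≤ ENNReal.ofReal (1 + C) := by gcongr

variable {H : Type*} [NormedAddCommGroup H] [InnerProductSpace ℝ H]
  [TopologicalSpace.SeparableSpace H]

lemma iSup_toNNReal_two_mul_inner_denseSeq_sub (ξ : H) :
    ⨆ k, ((2 * inner ℝ ξ (TopologicalSpace.denseSeq H k) -
      ‖TopologicalSpace.denseSeq H k‖ ^ 2).toNNReal : ℝ≥0∞) = ENNReal.ofReal (‖ξ‖ ^ 2) := by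
  simp only [two_mul_inner_sub_norm_sq]
  refine le_antisymm (iSup_le fun k => ENNReal.ofReal_le_ofReal (by simp)) ?_
  refine le_of_forall_lt fun c hc => ?_
  have hlim : Tendsto (fun u => ENNReal.ofReal (‖ξ‖ ^ 2 - ‖ξ - u‖ ^ 2)) (𝓝 ξ)
      (𝓝 (ENNReal.ofReal (‖ξ‖ ^ 2))) := by
    have : Continuous fun u => ENNReal.ofReal (‖ξ‖ ^ 2 - ‖ξ - u‖ ^ 2) :=
      ENNReal.continuous_ofReal.comp (by fun_prop)
    simpa using this.tendsto ξ
  obtain ⟨_, ⟨k, rfl⟩, hk⟩ := (TopologicalSpace.denseRange_denseSeq H).inter_nhds_nonempty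
    (hlim.eventually (lt_mem_nhds hc))
  exact lt_iSup_iff.2 ⟨k, hk⟩

variable [MeasurableSpace H] [BorelSpace H] {ι : Type*} {l : Filter ι}
  {μ : ι → ProbabilityMeasure H} {ν : ProbabilityMeasure H}

lemma integrable_norm_sq_of_tendsto_weakLaw
    (hμν : Tendsto (fun i => weakLaw (μ i)) l (𝓝 (weakLaw ν))) {C : ℝ}
    (hC : ∃ᶠ i in l, Integrable (fun ξ => ‖ξ‖ ^ 2) (μ i : Measure H) ∧
      ∫ ξ, ‖ξ‖ ^ 2 ∂(μ i : Measure H) ≤ C) :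
    Integrable (fun ξ => ‖ξ‖ ^ 2) (ν : Measure H) := by
  have hle := lintegral_iSup_le_of_frequently_le hμν (C := ENNReal.ofReal C)
    (φ := fun k ξ => (2 * inner ℝ ((toWeakSpace ℝ H).symm ξ) (TopologicalSpace.denseSeq H k) -
      ‖TopologicalSpace.denseSeq H k‖ ^ 2).toNNReal)
    (fun k => continuous_real_toNNReal.comp
      (((continuous_weakSpace_inner _).const_mul 2).sub continuous_const))
  simp only [lintegral_weakLaw, LinearEquiv.symm_apply_apply,
    iSup_toNNReal_two_mul_inner_denseSeq_sub] at hle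
  refine ⟨by fun_prop, (hasFiniteIntegral_iff_ofReal (ae_of_all _ fun ξ => by positivity)).2 ?_⟩
  refine (hle (hC.mono fun i hi => ?_)).trans_lt ENNReal.ofReal_lt_top
  rw [← ofReal_integral_eq_lintegral_ofReal hi.1 (ae_of_all _ fun ξ => by positivity)]
  exact ENNReal.ofReal_le_ofReal hi.2

lemma tendsto_integral_quantGain {κ : Type*} [Finite κ] [Nonempty κ]
    (hμν : Tendsto (fun i => weakLaw (μ i)) l (𝓝 (weakLaw ν))) {C : ℝ}
    (hC : ∀ᶠ i in l, Integrable (fun ξ => ‖ξ‖ ^ 2) (μ i : Measure H) ∧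
      ∫ ξ, ‖ξ‖ ^ 2 ∂(μ i : Measure H) ≤ C) (x : κ → H) :
    Tendsto (fun i => ∫ ξ, quantGain x ξ ∂(μ i : Measure H)) l
      (𝓝 (∫ ξ, quantGain x ξ ∂(ν : Measure H))) := by
  have := Fintype.ofFinite κ
  have hlim := tendsto_integral_of_eventually_integral_sq_le hμν
    (continuous_weakSpace_quantGain x) (C := 8 * ‖x‖ ^ 2 * C + 2 * ‖x‖ ^ 4)
  simp only [integral_weakLaw, integrable_weakLaw_iff, LinearEquiv.symm_apply_apply] at hlim
  refine hlim (hC.mono fun i ⟨hi, hiC⟩ => ⟨integrable_quantGain_sq hi x, ?_⟩)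
  calc ∫ ξ, quantGain x ξ ^ 2 ∂(μ i : Measure H)
      ≤ ∫ ξ, (8 * ‖x‖ ^ 2 * ‖ξ‖ ^ 2 + 2 * ‖x‖ ^ 4) ∂(μ i : Measure H) :=
        integral_mono (integrable_quantGain_sq hi x)
          ((hi.const_mul _).add (integrable_const _)) (quantGain_sq_le x)
    _ = 8 * ‖x‖ ^ 2 * ∫ ξ, ‖ξ‖ ^ 2 ∂(μ i : Measure H) + 2 * ‖x‖ ^ 4 := by
        rw [integral_add (hi.const_mul _) (integrable_const _), integral_const_mul, integral_const,
          probReal_univ, one_smul]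
    _ ≤ 8 * ‖x‖ ^ 2 * C + 2 * ‖x‖ ^ 4 := by gcongr

theorem exists_tendsto_weakLaw_of_tendsto_integral_quantGain [CompleteSpace H] [l.NeBot]
    {κ : Type*} [Finite κ] [Nontrivial κ] {C : ℝ}
    (hC : ∀ᶠ i in l, Integrable (fun ξ => ‖ξ‖ ^ 2) (μ i : Measure H) ∧
      ∫ ξ, ‖ξ‖ ^ 2 ∂(μ i : Measure H) ≤ C) {G : (κ → H) → ℝ}
    (hG : ∀ x, Tendsto (fun i => ∫ ξ, quantGain x ξ ∂(μ i : Measure H)) l (𝓝 (G x))) :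
    ∃ ν : ProbabilityMeasure H, Integrable (fun ξ => ‖ξ‖ ^ 2) (ν : Measure H) ∧
      Tendsto (fun i => weakLaw (μ i)) l (𝓝 (weakLaw ν)) ∧
      ∀ x, ∫ ξ, quantGain x ξ ∂(ν : Measure H) = G x := by
  have hcluster (ν : ProbabilityMeasure H)
      (hν : MapClusterPt (weakLaw ν) l fun i => weakLaw (μ i)) :
      Integrable (fun ξ => ‖ξ‖ ^ 2) (ν : Measure H) ∧
        ∀ x, ∫ ξ, quantGain x ξ ∂(ν : Measure H) = G x := by
    obtain ⟨U, hU, hUν⟩ := mapClusterPt_iff_ultrafilter.1 hν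
    have hCU := hC.filter_mono hU
    exact ⟨integrable_norm_sq_of_tendsto_weakLaw hUν hCU.frequently, fun x =>
      tendsto_nhds_unique (tendsto_integral_quantGain hUν hCU x) ((hG x).mono_left hU)⟩
  have hcpt := isCompact_closure_weakLaw
    (surjective_inclusionInDoubleDual (H := H)) (1 + C).toNNReal
  have hmem : ∀ᶠ i in l, weakLaw (μ i) ∈ closure (weakLaw ''
      {P : ProbabilityMeasure H | ∫⁻ ξ, ‖ξ‖ₑ ∂(P : Measure H) ≤ (1 + C).toNNReal}) :=
    hC.mono fun i hi =>
      subset_closure ⟨μ i, lintegral_enorm_le_of_integral_norm_sq_le hi.1 hi.2, rfl⟩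
  obtain ⟨Q, -, hQ⟩ := hcpt.exists_mapClusterPt_of_frequently hmem.frequently
  obtain ⟨ν, rfl⟩ := weakLaw_surjective Q
  obtain ⟨hν₂, hνG⟩ := hcluster ν hQ
  refine ⟨ν, hν₂, hcpt.tendsto_nhds_of_unique_mapClusterPt hmem fun Q _ hQ => ?_, hνG⟩
  obtain ⟨ν', rfl⟩ := weakLaw_surjective Q
  obtain ⟨hν'₂, hν'G⟩ := hcluster ν' hQ
  have hνν' : (ν' : Measure H) = ν :=
    ext_of_integral_quantGain hν'₂ hν₂ fun x => (hν'G x).trans (hνG x).symm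
  rw [Subtype.ext hνν']

end SecondMoment

section QuantErr

lemma enorm_rpow_two {E : Type*} [SeminormedAddCommGroup E] (v : E) :
    (‖v‖₊ : ℝ≥0∞) ^ (2 : ℝ) = ENNReal.ofReal (‖v‖ ^ 2) := by
  rw [ENNReal.ofReal_pow (norm_nonneg v), ofReal_norm, ENNReal.rpow_two, enorm_eq_nnnorm]

lemma hasFiniteMoment_two_iff {E : Type*} [NormedAddCommGroup E] [MeasurableSpace E]
    [OpensMeasurableSpace E] {P : Measure E} :
    HasFiniteMoment 2 P ↔ Integrable (fun ξ => ‖ξ‖ ^ 2) P := by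
  have hmeas : AEStronglyMeasurable (fun ξ : E => ‖ξ‖ ^ 2) P :=
    (measurable_norm.pow_const 2).aestronglyMeasurable
  simp only [HasFiniteMoment, enorm_rpow_two, Integrable, hmeas, true_and, ← lt_top_iff_ne_top,
    hasFiniteIntegral_iff_ofReal (ae_of_all P fun ξ : E => sq_nonneg ‖ξ‖)]

lemma quantErr_two_sq {H : Type*} [NormedAddCommGroup H] [InnerProductSpace ℝ H]
    [MeasurableSpace H] [BorelSpace H] {N : ℕ} [NeZero N] {P : Measure H} [IsFiniteMeasure P]
    (hP : Integrable (fun ξ => ‖ξ‖ ^ 2) P) (x : Fin N → H) :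
    quantErr 2 N P x ^ 2 = ∫ ξ, ‖ξ‖ ^ 2 ∂P - ∫ ξ, quantGain x ξ ∂P := by
  have hgain := integrable_quantGain hP x
  have hnonneg (ξ : H) : 0 ≤ ‖ξ‖ ^ 2 - quantGain x ξ := by
    rw [norm_sq_sub_quantGain]
    exact le_ciInf fun i => sq_nonneg ‖ξ - x i‖
  have hdist (ξ : H) : ⨅ i, (‖ξ - x i‖₊ : ℝ≥0∞) ^ (2 : ℝ) =
      ENNReal.ofReal (‖ξ‖ ^ 2 - quantGain x ξ) := by
    simp only [enorm_rpow_two, norm_sq_sub_quantGain, ENNReal.ofReal_iInf]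
  rw [quantErr, ← Real.sqrt_eq_rpow, Real.sq_sqrt ENNReal.toReal_nonneg, ← integral_sub hP hgain]
  simp only [hdist]
  rw [integral_eq_lintegral_of_nonneg_ae (ae_of_all P hnonneg) (hP.sub hgain).1]

end QuantErr

theorem stmt14_general {H ι : Type*} [NormedAddCommGroup H] [InnerProductSpace ℝ H]
    [CompleteSpace H] [TopologicalSpace.SeparableSpace H]
    [MeasurableSpace H] [BorelSpace H] {l : Filter ι} [l.NeBot] {N : ℕ} (hN : 2 ≤ N)
    (μ : ι → Measure H) [∀ n, IsProbabilityMeasure (μ n)]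
    (hμ : ∀ n, HasFiniteMoment 2 (μ n)) (f : (Fin N → H) → ℝ)
    (hf : ∀ x : Fin N → H, Tendsto (fun n => quantErr 2 N (μ n) x) l (𝓝 (f x))) :
    ∃ μ' : Measure H, IsProbabilityMeasure μ' ∧ HasFiniteMoment 2 μ' ∧
      (∀ g : H → ℝ, (∃ Cg : ℝ, ∀ ξ, |g ξ| ≤ Cg) →
        Continuous (fun ξ : WeakSpace ℝ H => g ξ) →
        Tendsto (fun n => ∫ ξ, g ξ ∂(μ n)) l (𝓝 (∫ ξ, g ξ ∂μ'))) ∧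
      ∃ L : ℝ, Tendsto (fun n => ∫ ξ, ‖ξ‖ ^ 2 ∂(μ n)) l (𝓝 L) ∧
        ∀ x : Fin N → H,
          f x ^ 2 = quantErr 2 N μ' x ^ 2 + L - ∫ ξ, ‖ξ‖ ^ 2 ∂μ' := by
  have : NeZero N := ⟨by lia⟩
  have : Nontrivial (Fin N) := Fin.nontrivial_iff_two_le.2 hN
  have hμ₂ (n : ι) : Integrable (fun ξ => ‖ξ‖ ^ 2) (μ n) := hasFiniteMoment_two_iff.1 (hμ n)
  have hsq (x : Fin N → H) : Tendsto (fun n => ∫ ξ, ‖ξ‖ ^ 2 ∂(μ n) - ∫ ξ, quantGain x ξ ∂(μ n)) l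
      (𝓝 (f x ^ 2)) :=
    ((hf x).pow 2).congr fun n => quantErr_two_sq (hμ₂ n) x
  have hL : Tendsto (fun n => ∫ ξ, ‖ξ‖ ^ 2 ∂(μ n)) l (𝓝 (f 0 ^ 2)) := by
    simpa [quantGain_zero] using hsq 0
  have hG (x : Fin N → H) : Tendsto (fun n => ∫ ξ, quantGain x ξ ∂(μ n)) l
      (𝓝 (f 0 ^ 2 - f x ^ 2)) := by
    simpa using hL.sub (hsq x)
  have hC : ∀ᶠ n in l, Integrable (fun ξ => ‖ξ‖ ^ 2) (μ n) ∧
      ∫ ξ, ‖ξ‖ ^ 2 ∂(μ n) ≤ f 0 ^ 2 + 1 :=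
    (hL.eventually_le_const (lt_add_one _)).mono fun n hn => ⟨hμ₂ n, hn⟩
  obtain ⟨ν, hν₂, hμν, hνG⟩ := exists_tendsto_weakLaw_of_tendsto_integral_quantGain
    (μ := fun n => ⟨μ n, inferInstance⟩) hC hG
  refine ⟨ν, inferInstance, hasFiniteMoment_two_iff.2 hν₂, ?_, f 0 ^ 2, hL, fun x => ?_⟩
  · rintro g ⟨Cg, hCg⟩ hg
    exact tendsto_integral_of_tendsto_weakLaw hμν hg hCg
  · rw [quantErr_two_sq hν₂, hνG]
    ring

/-- à la Paul Lévy characterization in Hilbert space: if `e_{2,2}(μ_n, ·)`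
converges pointwise on `H²` to `f : H² → ℝ₊`, then there is a probability measure `μ_∞` with
finite second moment such that `μ_n → μ_∞` in distribution for the weak topology of `H`
(integrals of bounded, weakly continuous functions converge), the second moments of `μ_n`
converge to some finite `L`, and `f² = e_{2,2}(μ_∞, ·)² + L − ∫ ‖ξ‖² dμ_∞`. -/
theorem stmt14 {H : Type*} [NormedAddCommGroup H] [InnerProductSpace ℝ H]
    [CompleteSpace H] [TopologicalSpace.SeparableSpace H]
    [MeasurableSpace H] [BorelSpace H]
    (μ : ℕ → Measure H) [∀ n, IsProbabilityMeasure (μ n)]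
    (hμ : ∀ n, HasFiniteMoment 2 (μ n))
    (f : (Fin 2 → H) → ℝ) (hf₀ : ∀ x, 0 ≤ f x)
    (hf : ∀ x : Fin 2 → H, Tendsto (fun n => quantErr 2 2 (μ n) x) atTop (𝓝 (f x))) :
    ∃ μ' : Measure H, IsProbabilityMeasure μ' ∧ HasFiniteMoment 2 μ' ∧
      (∀ g : H → ℝ, (∃ Cg : ℝ, ∀ ξ, |g ξ| ≤ Cg) →
        Continuous (fun ξ : WeakSpace ℝ H => g ξ) →
        Tendsto (fun n => ∫ ξ, g ξ ∂(μ n)) atTop (𝓝 (∫ ξ, g ξ ∂μ'))) ∧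
      ∃ L : ℝ, Tendsto (fun n => ∫ ξ, ‖ξ‖ ^ 2 ∂(μ n)) atTop (𝓝 L) ∧
        ∀ x : Fin 2 → H,
          f x ^ 2 = quantErr 2 2 μ' x ^ 2 + L - ∫ ξ, ‖ξ‖ ^ 2 ∂μ' :=
  stmt14_general le_rfl μ hμ f hf
end
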